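/- arXiv:0807.4074 — 2 statements merged into one kernel-verified Lean document; each statement's English description precedes it below -/
import Mathlib

section
/- For every integer n ≥ 2 there exists a rate-1/2 scaled complex orthogonal design of size [ν(n), n, ν(n)/2] with decoding delay ν(n): there exist complex ν(n)×n matrices A_0,…,A_{k−1}, B_0,…,B_{k−1}, where k = ν(n)/2, such that (a) every entry of every A_i and B_i lies in {0, 1, −1, 1/√2, −1/√2}; (b) for each matrix position (r,c), at most one entry among {A_i(r,c), B_i(r,c) : 0 ≤ i < k} is nonzero; and (c) for every x ∈ ℂ^k, setting G(x) = Σ_{i<k} (x_i A_i + conj(x_i) B_i), one has G(x)ᴴ G(x) = (Σ_{i<k} |x_i|²)·I_n. -/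
open Matrix

/-- `δ(n)`: `δ(8s+1)=4s`, `δ(8s+2)=4s+1`, `δ(8s+3)=δ(8s+4)=4s+2`,
`δ(8s+5)=δ(8s+6)=δ(8s+7)=δ(8s+8)=4s+3` (for `n ≥ 1`). -/
def delta (n : ℕ) : ℕ :=
  match (n - 1) % 8 with
  | 0 => 4 * ((n - 1) / 8)
  | 1 => 4 * ((n - 1) / 8) + 1
  | 2 => 4 * ((n - 1) / 8) + 2
  | 3 => 4 * ((n - 1) / 8) + 2
  | _ => 4 * ((n - 1) / 8) + 3

/-- `ν(n) = 2^{δ(n)}`. -/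
def nu (n : ℕ) : ℕ := 2 ^ delta n

/-! Let `K` be a symmetric signed permutation matrix of size `p` without fixed points. A vector `w`
with `conj w = K w` is determined by `p / 2` free complex variables, and its coordinates are these
variables and, up to sign, their conjugates. For such `w` and `M* = K Mᵀ Kᵀ` one has
`wᴴ M w = wᴴ M* w`, so the vectors `P c w` are orthogonal of squared norms `s c * |w|² / 2` as soon
as the integer matrices `P c` satisfy `Pᵀ Q + (Pᵀ Q)* = 0` for distinct columns `P, Q` and
`Pᵀ P + (Pᵀ P)* = s c`; dividing column `c` by `√(s c)` gives the design.

Tensoring with the two-mode fermionic Fock space multiplies the size by `4`, adds the four creation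
and annihilation operators as new columns and turns a symmetric `K` into an antisymmetric one and
vice versa. Two such steps match `ν(n + 8) = 16 ν(n)`, and the cases `n ≤ 9` come from systems of
size at most `4` by at most one step. -/

open scoped Kronecker

/-- A signed partial permutation matrix: all entries are `0` or `±1`, with at most one nonzero
entry in each row and in each column. -/
structure IsSignedPartialPerm {R m n : Type*} [Ring R] (M : Matrix m n R) : Prop where
  entry : ∀ i j, M i j = 0 ∨ M i j = 1 ∨ M i j = -1
  row_unique : ∀ i j j', M i j ≠ 0 → M i j' ≠ 0 → j = j'
  col_unique : ∀ i i' j, M i j ≠ 0 → M i' j ≠ 0 → i = i'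

-- Instance search does not unfold `Matrix`, hence the detour through the function `of.symm M`.
instance {R m n : Type*} [Ring R] [DecidableEq R] [Fintype m] [Fintype n] [DecidableEq m]
    [DecidableEq n] (M : Matrix m n R) : Decidable (IsSignedPartialPerm M) :=
  let f := of.symm M
  decidable_of_iff ((∀ i j, f i j = 0 ∨ f i j = 1 ∨ f i j = -1) ∧
    (∀ i j j', f i j ≠ 0 → f i j' ≠ 0 → j = j') ∧ ∀ i i' j, f i j ≠ 0 → f i' j ≠ 0 → i = i')
    ⟨fun h ↦ ⟨h.1, h.2.1, h.2.2⟩, fun h ↦ ⟨h.1, h.2, h.3⟩⟩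

namespace IsSignedPartialPerm

variable {R l m n o : Type*} [Ring R]

lemma one [DecidableEq n] : IsSignedPartialPerm (1 : Matrix n n R) where
  entry i j := by by_cases h : i = j <;> simp [one_apply, h]
  row_unique _ _ _ h h' :=
    (of_not_not (mt one_apply_ne h)).symm.trans (of_not_not (mt one_apply_ne h'))
  col_unique _ _ _ h h' :=
    (of_not_not (mt one_apply_ne h)).trans (of_not_not (mt one_apply_ne h')).symm

lemma transpose {M : Matrix m n R} (hM : IsSignedPartialPerm M) : IsSignedPartialPerm Mᵀ where
  entry i j := hM.entry j i
  row_unique i j j' := hM.col_unique j j' i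
  col_unique i i' j := hM.row_unique j i i'

lemma submatrix {M : Matrix m n R} (hM : IsSignedPartialPerm M) {f : l → m} {g : o → n}
    (hf : f.Injective) (hg : g.Injective) : IsSignedPartialPerm (M.submatrix f g) where
  entry i j := hM.entry (f i) (g j)
  row_unique _ _ _ h h' := hg (hM.row_unique _ _ _ h h')
  col_unique _ _ _ h h' := hf (hM.col_unique _ _ _ h h')

lemma add {M N : Matrix m n R} (hM : IsSignedPartialPerm M) (hN : IsSignedPartialPerm N)
    (hrow : ∀ i j j', M i j = 0 ∨ N i j' = 0) (hcol : ∀ i i' j, M i j = 0 ∨ N i' j = 0) :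
    IsSignedPartialPerm (M + N) where
  entry i j := by
    have := hM.entry i j
    have := hN.entry i j
    rcases hrow i j j with h | h <;> simp_all
  row_unique i j j' := by
    have := hM.row_unique i j j'
    have := hN.row_unique i j j'
    have := hrow i j
    have := hrow i j'
    grind [Matrix.add_apply]
  col_unique i i' j := by
    have := hM.col_unique i i' j
    have := hN.col_unique i i' j
    have := hcol i
    have := hcol i'
    grind [Matrix.add_apply]

lemma exists_of_mul_ne_zero [Fintype n] {M : Matrix m n R} {N : Matrix n o R} {i : m} {j : o}
    (h : (M * N) i j ≠ 0) : ∃ k, M i k ≠ 0 ∧ N k j ≠ 0 := by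
  obtain ⟨k, -, hk⟩ := Finset.exists_ne_zero_of_sum_ne_zero h
  exact ⟨k, left_ne_zero_of_mul hk, right_ne_zero_of_mul hk⟩

lemma mul_apply_eq [Fintype n] {M : Matrix m n R} (hM : IsSignedPartialPerm M) (N : Matrix n o R)
    {i : m} {k : n} (hk : M i k ≠ 0) (j : o) : (M * N) i j = M i k * N k j :=
  Fintype.sum_eq_single k fun l hl ↦
    mul_eq_zero_of_left (of_not_not fun h ↦ hl (hM.row_unique i l k h hk)) _

lemma mul [Fintype n] {M : Matrix m n R} {N : Matrix n o R} (hM : IsSignedPartialPerm M)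
    (hN : IsSignedPartialPerm N) : IsSignedPartialPerm (M * N) where
  entry i j := by
    by_cases h : (M * N) i j = 0
    · exact .inl h
    · obtain ⟨k, hk, -⟩ := exists_of_mul_ne_zero h
      rw [hM.mul_apply_eq N hk]
      rcases hM.entry i k with a | a | a <;> rcases hN.entry k j with b | b | b <;> simp [a, b]
  row_unique i j j' h h' := by
    obtain ⟨k, hMk, hNk⟩ := exists_of_mul_ne_zero h
    obtain ⟨k', hMk', hNk'⟩ := exists_of_mul_ne_zero h'
    obtain rfl := hM.row_unique i k k' hMk hMk'
    exact hN.row_unique k j j' hNk hNk'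
  col_unique i i' j h h' := by
    obtain ⟨k, hMk, hNk⟩ := exists_of_mul_ne_zero h
    obtain ⟨k', hMk', hNk'⟩ := exists_of_mul_ne_zero h'
    obtain rfl := hN.col_unique k k' j hNk hNk'
    exact hM.col_unique i i' k hMk hMk'

lemma kronecker {M : Matrix l m R} {N : Matrix n o R} (hM : IsSignedPartialPerm M)
    (hN : IsSignedPartialPerm N) : IsSignedPartialPerm (M ⊗ₖ N) where
  entry i j := by
    rw [kronecker_apply]
    rcases hM.entry i.1 j.1 with a | a | a <;> rcases hN.entry i.2 j.2 with b | b | b <;>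
      simp [a, b]
  row_unique i j j' h h' := Prod.ext
    (hM.row_unique _ _ _ (left_ne_zero_of_mul h) (left_ne_zero_of_mul h'))
    (hN.row_unique _ _ _ (right_ne_zero_of_mul h) (right_ne_zero_of_mul h'))
  col_unique i i' j h h' := Prod.ext
    (hM.col_unique _ _ _ (left_ne_zero_of_mul h) (left_ne_zero_of_mul h'))
    (hN.col_unique _ _ _ (right_ne_zero_of_mul h) (right_ne_zero_of_mul h'))

end IsSignedPartialPerm

/-- The adjoint of `M` for the bilinear form `(x, y) ↦ xᵀ K y`, provided `K` is orthogonal and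
`Kᵀ = ±K`. -/
def formAdjoint {R n : Type*} [Fintype n] [CommRing R] (K M : Matrix n n R) : Matrix n n R :=
  K * Mᵀ * Kᵀ

section formAdjoint

variable {R m n : Type*} [Fintype m] [Fintype n] [CommRing R]

lemma formAdjoint_add (K M N : Matrix n n R) :
    formAdjoint K (M + N) = formAdjoint K M + formAdjoint K N := by
  simp only [formAdjoint, transpose_add, Matrix.mul_add, Matrix.add_mul]

lemma formAdjoint_transpose (K M : Matrix n n R) : formAdjoint K Mᵀ = (formAdjoint K M)ᵀ := by
  simp only [formAdjoint, transpose_mul, transpose_transpose, Matrix.mul_assoc]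

lemma formAdjoint_submatrix (K M : Matrix n n R) (e : m ≃ n) :
    formAdjoint (K.submatrix e e) (M.submatrix e e) = (formAdjoint K M).submatrix e e := by
  simp only [formAdjoint, transpose_submatrix, submatrix_mul_equiv]

lemma formAdjoint_kronecker (K M : Matrix m m R) (L N : Matrix n n R) :
    formAdjoint (K ⊗ₖ L) (M ⊗ₖ N) = formAdjoint K M ⊗ₖ formAdjoint L N := by
  simp only [formAdjoint, ← kroneckerMap_transpose, ← mul_kronecker_mul]

lemma formAdjoint_map {S : Type*} [CommRing S] (f : R →+* S) (K M : Matrix n n R) :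
    (formAdjoint K M).map f = formAdjoint (K.map f) (M.map f) := by
  simp only [formAdjoint, Matrix.map_mul, transpose_map]

/-- The trace `M + M*` of `M` for the involution `M ↦ M*` given by `formAdjoint K`. -/
def formTrace (K M : Matrix n n R) : Matrix n n R :=
  M + formAdjoint K M

lemma formTrace_transpose (K M : Matrix n n R) : formTrace K Mᵀ = (formTrace K M)ᵀ := by
  rw [formTrace, formAdjoint_transpose, ← transpose_add, formTrace]

lemma formTrace_submatrix (K M : Matrix n n R) (e : m ≃ n) :
    formTrace (K.submatrix e e) (M.submatrix e e) = (formTrace K M).submatrix e e := by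
  rw [formTrace, formAdjoint_submatrix]
  rfl

lemma formTrace_map {S : Type*} [CommRing S] (f : R →+* S) (K M : Matrix n n R) :
    (formTrace K M).map f = formTrace (K.map f) (M.map f) := by
  rw [formTrace, Matrix.map_add _ (map_add f), formAdjoint_map, formTrace]

lemma dotProduct_formAdjoint_mulVec [DecidableEq n] {K : Matrix n n R} (hKt : Kᵀ = K)
    (hK : Kᵀ * K = 1) (M : Matrix n n R) (w : n → R) :
    (K *ᵥ w) ⬝ᵥ (formAdjoint K M *ᵥ w) = (K *ᵥ w) ⬝ᵥ (M *ᵥ w) := by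
  calc (K *ᵥ w) ⬝ᵥ (formAdjoint K M *ᵥ w)
    _ = w ⬝ᵥ ((Kᵀ * K * Mᵀ * Kᵀ) *ᵥ w) := by
      rw [← vecMul_transpose, ← dotProduct_mulVec, mulVec_mulVec, formAdjoint]
      simp only [Matrix.mul_assoc]
    _ = w ⬝ᵥ ((Kᵀ * M)ᵀ *ᵥ w) := by
      rw [hK, Matrix.one_mul, Matrix.transpose_mul, transpose_transpose, hKt]
    _ = (K *ᵥ w) ⬝ᵥ (M *ᵥ w) := by
      rw [mulVec_transpose, dotProduct_comm, ← dotProduct_mulVec, ← mulVec_mulVec,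
        dotProduct_mulVec, vecMul_transpose]

lemma dotProduct_formTrace_mulVec [DecidableEq n] {K : Matrix n n R} (hKt : Kᵀ = K)
    (hK : Kᵀ * K = 1) (M : Matrix n n R) (w : n → R) :
    (K *ᵥ w) ⬝ᵥ (formTrace K M *ᵥ w) = 2 * ((K *ᵥ w) ⬝ᵥ (M *ᵥ w)) := by
  rw [formTrace, add_mulVec, dotProduct_add, dotProduct_formAdjoint_mulVec hKt hK, two_mul]

end formAdjoint

/-- A signed permutation matrix `K` without fixed points such that `Kᵀ = εK`. For `ε = 1` the
equation `conj w = K w` defines a real structure; the case `ε = -1` (quaternionic structures) is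
needed as an intermediate stage of the induction. -/
structure IsConjugation {n : Type*} [Fintype n] [DecidableEq n] (ε : ℤˣ) (K : Matrix n n ℤ) :
    Prop where
  transpose_eq : Kᵀ = ε • K
  mul_transpose : K * Kᵀ = 1
  diag_eq_zero : ∀ i, K i i = 0
  isSignedPartialPerm : IsSignedPartialPerm K

namespace IsConjugation

variable {m n : Type*} [Fintype m] [DecidableEq m] [Fintype n] [DecidableEq n] {ε η : ℤˣ}
  {K : Matrix n n ℤ} {L : Matrix m m ℤ}

lemma transpose_mul (hK : IsConjugation ε K) : Kᵀ * K = 1 :=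
  mul_eq_one_comm.1 hK.mul_transpose

lemma kronecker (hK : IsConjugation ε K) (hL : IsConjugation η L) :
    IsConjugation (ε * η) (K ⊗ₖ L) where
  transpose_eq := by
    rw [← kroneckerMap_transpose, hK.transpose_eq, hL.transpose_eq]
    simp only [Units.smul_def, smul_kronecker, kronecker_smul, smul_smul, Units.val_mul, mul_comm]
  mul_transpose := by
    rw [← kroneckerMap_transpose, ← mul_kronecker_mul, hK.mul_transpose, hL.mul_transpose,
      one_kronecker_one]
  diag_eq_zero i := by rw [kronecker_apply, hK.diag_eq_zero, zero_mul]
  isSignedPartialPerm := hK.isSignedPartialPerm.kronecker hL.isSignedPartialPerm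

lemma submatrix (hK : IsConjugation ε K) (e : m ≃ n) : IsConjugation ε (K.submatrix e e) where
  transpose_eq := by rw [transpose_submatrix, hK.transpose_eq]; rfl
  mul_transpose := by
    rw [transpose_submatrix, submatrix_mul_equiv, hK.mul_transpose, submatrix_one_equiv]
  diag_eq_zero i := hK.diag_eq_zero (e i)
  isSignedPartialPerm := hK.isSignedPartialPerm.submatrix e.injective e.injective

lemma formAdjoint_one (hK : IsConjugation ε K) : formAdjoint K 1 = 1 := by
  rw [formAdjoint, transpose_one, Matrix.mul_one, hK.mul_transpose]

lemma formAdjoint_mul (hK : IsConjugation ε K) (M N : Matrix n n ℤ) :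
    formAdjoint K (M * N) = formAdjoint K N * formAdjoint K M := by
  calc K * (M * N)ᵀ * Kᵀ = K * Nᵀ * 1 * Mᵀ * Kᵀ := by
        simp only [Matrix.transpose_mul, Matrix.mul_one, Matrix.mul_assoc]
    _ = K * Nᵀ * Kᵀ * (K * Mᵀ * Kᵀ) := by
        simp only [← hK.transpose_mul, Matrix.mul_assoc]

lemma formAdjoint_formAdjoint (hK : IsConjugation ε K) (M : Matrix n n ℤ) :
    formAdjoint K (formAdjoint K M) = M := by
  have hswap : Kᵀ * M * K = K * M * Kᵀ := by
    simp only [hK.transpose_eq, Matrix.smul_mul, Matrix.mul_smul]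
  calc K * (K * Mᵀ * Kᵀ)ᵀ * Kᵀ = K * (K * M * Kᵀ) * Kᵀ := by
        simp only [Matrix.transpose_mul, transpose_transpose, Matrix.mul_assoc]
    _ = (K * Kᵀ) * M * (K * Kᵀ) := by rw [← hswap]; simp only [Matrix.mul_assoc]
    _ = M := by rw [hK.mul_transpose, Matrix.one_mul, Matrix.mul_one]

lemma formTrace_formAdjoint (hK : IsConjugation ε K) (M : Matrix n n ℤ) :
    formTrace K (formAdjoint K M) = formTrace K M := by
  rw [formTrace, hK.formAdjoint_formAdjoint, add_comm, formTrace]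

end IsConjugation

/-- The twisted orthogonality relations on the columns `P c` with squared norms `s c`. For a vector
`w` with `conj w = K w` they make the vectors `P c w` pairwise orthogonal. -/
def IsOrthogonalFamily {J n : Type*} [Fintype n] [DecidableEq n] [DecidableEq J] (K : Matrix n n ℤ)
    (P : J → Matrix n n ℤ) (s : J → ℕ) : Prop :=
  ∀ c d, formTrace K ((P c)ᵀ * P d) = if c = d then s c • 1 else 0

instance {J n : Type*} [Fintype n] [DecidableEq n] [Fintype J] [DecidableEq J] (K : Matrix n n ℤ)
    (P : J → Matrix n n ℤ) (s : J → ℕ) : Decidable (IsOrthogonalFamily K P s) :=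
  inferInstanceAs (Decidable (∀ c d, formTrace K ((P c)ᵀ * P d) = if c = d then s c • 1 else 0))

/-- Integral data from which a scaled complex orthogonal design is read off. The relations for the
transposed matrices are what makes the induction close. -/
structure IsOrthogonalSystem {J n : Type*} [Fintype n] [DecidableEq n] [DecidableEq J] (ε : ℤˣ)
    (K : Matrix n n ℤ) (P : J → Matrix n n ℤ) (s : J → ℕ) : Prop where
  isConjugation : IsConjugation ε K
  isSignedPartialPerm : ∀ c, IsSignedPartialPerm (P c)
  weight : ∀ c, s c = 1 ∨ s c = 2
  family : IsOrthogonalFamily K P s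
  family_transpose : IsOrthogonalFamily K (fun c ↦ (P c)ᵀ) s

section Submatrix

variable {I J J' n : Type*} [Fintype I] [DecidableEq I] [Fintype n] [DecidableEq n]
  [DecidableEq J] [DecidableEq J'] {ε : ℤˣ} {K : Matrix n n ℤ} {P : J → Matrix n n ℤ} {s : J → ℕ}

lemma IsOrthogonalFamily.submatrix (h : IsOrthogonalFamily K P s) (e : I ≃ n) (f : J' ↪ J) :
    IsOrthogonalFamily (K.submatrix e e) (fun c ↦ (P (f c)).submatrix e e) (s ∘ f) := by
  intro c d
  rw [transpose_submatrix, submatrix_mul_equiv, formTrace_submatrix]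
  calc (formTrace K ((P (f c))ᵀ * P (f d))).submatrix e e
    _ = (if f c = f d then s (f c) • 1 else 0 : Matrix n n ℤ).submatrix e e := by rw [h]
    _ = if c = d then s (f c) • 1 else 0 := by
      simp only [f.injective.eq_iff]
      split_ifs
      · exact congrArg (fun M : Matrix I I ℤ ↦ s (f c) • M) (submatrix_one_equiv e)
      · rfl

lemma IsOrthogonalSystem.submatrix (h : IsOrthogonalSystem ε K P s) (e : I ≃ n) (f : J' ↪ J) :
    IsOrthogonalSystem ε (K.submatrix e e) (fun c ↦ (P (f c)).submatrix e e) (s ∘ f) where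
  isConjugation := h.isConjugation.submatrix e
  isSignedPartialPerm c := (h.isSignedPartialPerm (f c)).submatrix e.injective e.injective
  weight c := h.weight (f c)
  family := h.family.submatrix e f
  family_transpose := h.family_transpose.submatrix e f

end Submatrix

lemma IsOrthogonalFamily.two_mul_dotProduct_mulVec {J n R : Type*} [Fintype n] [DecidableEq n]
    [DecidableEq J] [CommRing R] {K : Matrix n n ℤ} {P : J → Matrix n n ℤ} {s : J → ℕ}
    (hP : IsOrthogonalFamily K P s) (hK : IsConjugation 1 K) (w : n → R) (c d : J) :
    2 * (((P c).map (Int.castRingHom R) *ᵥ (K.map (Int.castRingHom R) *ᵥ w)) ⬝ᵥ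
      ((P d).map (Int.castRingHom R) *ᵥ w)) =
      if c = d then s c * ((K.map (Int.castRingHom R) *ᵥ w) ⬝ᵥ w) else 0 := by
  set ι := Int.castRingHom R
  have hKt : (K.map ι)ᵀ = K.map ι := by
    rw [← transpose_map, hK.transpose_eq, one_smul]
  have hKK : (K.map ι)ᵀ * K.map ι = 1 := by
    rw [← transpose_map, ← Matrix.map_mul, hK.transpose_mul, Matrix.map_one _ ι.map_zero ι.map_one]
  have hrel : formTrace (K.map ι) (((P c).map ι)ᵀ * (P d).map ι) =
      if c = d then (s c : R) • 1 else 0 := by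
    rw [← transpose_map, ← Matrix.map_mul, ← formTrace_map, hP c d]
    split_ifs
    · rw [Matrix.map_smul _ _ (map_nsmul ι _), Matrix.map_one _ ι.map_zero ι.map_one,
        Nat.cast_smul_eq_nsmul]
    · exact Matrix.map_zero _ ι.map_zero
  calc 2 * (((P c).map ι *ᵥ (K.map ι *ᵥ w)) ⬝ᵥ ((P d).map ι *ᵥ w))
    _ = 2 * ((K.map ι *ᵥ w) ⬝ᵥ ((((P c).map ι)ᵀ * (P d).map ι) *ᵥ w)) := by
      rw [← mulVec_mulVec, dotProduct_mulVec (K.map ι *ᵥ w), vecMul_transpose]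
    _ = (K.map ι *ᵥ w) ⬝ᵥ ((if c = d then (s c : R) • 1 else 0 : Matrix n n R) *ᵥ w) := by
      rw [← hrel, dotProduct_formTrace_mulVec hKt hKK]
    _ = if c = d then s c * ((K.map ι *ᵥ w) ⬝ᵥ w) else 0 := by
      split_ifs
      · rw [smul_mulVec, one_mulVec, dotProduct_smul, smul_eq_mul]
      · rw [zero_mulVec, dotProduct_zero]

/-- The particle-hole conjugation on the two-mode fermionic Fock space. -/
def fermionForm : Matrix (Fin 4) (Fin 4) ℤ :=
  !![0, 0, 0, 1; 0, 0, 1, 0; 0, -1, 0, 0; -1, 0, 0, 0]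

/-- The projection onto the even part of the two-mode fermionic Fock space. -/
def evenProj : Matrix (Fin 4) (Fin 4) ℤ :=
  !![1, 0, 0, 0; 0, 0, 0, 0; 0, 0, 0, 0; 0, 0, 0, 1]

/-- The projection onto the odd part of the two-mode fermionic Fock space. -/
def oddProj : Matrix (Fin 4) (Fin 4) ℤ :=
  !![0, 0, 0, 0; 0, 1, 0, 0; 0, 0, 1, 0; 0, 0, 0, 0]

/-- The operators `a₁, a₁ᵀ, a₂, a₂ᵀ`, where `a₁, a₂` are the annihilation operators of the two
modes in the Jordan–Wigner representation. -/
def fermionOp : Fin 4 → Matrix (Fin 4) (Fin 4) ℤ :=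
  ![!![0, 0, 1, 0; 0, 0, 0, 1; 0, 0, 0, 0; 0, 0, 0, 0],
    !![0, 0, 0, 0; 0, 0, 0, 0; 1, 0, 0, 0; 0, 1, 0, 0],
    !![0, 1, 0, 0; 0, 0, 0, 0; 0, 0, 0, -1; 0, 0, 0, 0],
    !![0, 0, 0, 0; 1, 0, 0, 0; 0, 0, 0, 0; 0, 0, -1, 0]]

lemma isConjugation_fermionForm : IsConjugation (-1) fermionForm where
  transpose_eq := by decide +kernel
  mul_transpose := by decide +kernel
  diag_eq_zero := by decide +kernel
  isSignedPartialPerm := by decide +kernel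

lemma evenProj_add_oddProj : evenProj + oddProj = 1 := by decide +kernel

lemma formAdjoint_evenProj : formAdjoint fermionForm evenProj = evenProj := by decide +kernel

lemma formAdjoint_oddProj : formAdjoint fermionForm oddProj = oddProj := by decide +kernel

/-- A family of operators on the two-mode Fock space which are odd, skew-adjoint for `fermionForm`
and satisfy the canonical anticommutation relations with each other's transposes. -/
structure IsFermionFamily {L : Type*} [DecidableEq L] (b : L → Matrix (Fin 4) (Fin 4) ℤ) :
    Prop where
  evenProj_mul : ∀ f, evenProj * b f = b f * oddProj
  oddProj_mul : ∀ f, oddProj * b f = b f * evenProj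
  formAdjoint_eq : ∀ f, formAdjoint fermionForm (b f) = -b f
  anticomm : ∀ f g, (b f)ᵀ * b g + b g * (b f)ᵀ = if f = g then 1 else 0

lemma isFermionFamily_fermionOp : IsFermionFamily fermionOp := by
  constructor <;> decide +kernel

lemma isFermionFamily_fermionOp_transpose : IsFermionFamily fun f ↦ (fermionOp f)ᵀ := by
  constructor <;> decide +kernel

lemma isSignedPartialPerm_fermionOp : ∀ f, IsSignedPartialPerm (fermionOp f) := by
  decide +kernel

lemma IsFermionFamily.formTrace_eq {L : Type*} [DecidableEq L]
    {b : L → Matrix (Fin 4) (Fin 4) ℤ} (hb : IsFermionFamily b) (f g : L) :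
    formTrace fermionForm ((b f)ᵀ * b g) = if f = g then 1 else 0 := by
  rw [formTrace, isConjugation_fermionForm.formAdjoint_mul, formAdjoint_transpose,
    hb.formAdjoint_eq, hb.formAdjoint_eq, transpose_neg, neg_mul_neg, hb.anticomm]

section ParityMix

variable {n : Type*}

/-- The operator acting as `A` on the even and as `B` on the odd part of the Fock space factor. -/
def parityMix (A B : Matrix n n ℤ) : Matrix (n × Fin 4) (n × Fin 4) ℤ :=
  A ⊗ₖ evenProj + B ⊗ₖ oddProj

lemma parityMix_transpose (A B : Matrix n n ℤ) : (parityMix A B)ᵀ = parityMix Aᵀ Bᵀ := by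
  have heven : evenProjᵀ = evenProj := by decide +kernel
  have hodd : oddProjᵀ = oddProj := by decide +kernel
  simp only [parityMix, transpose_add, ← kroneckerMap_transpose, heven, hodd]

lemma parityMix_self (A : Matrix n n ℤ) : parityMix A A = A ⊗ₖ 1 := by
  rw [parityMix, ← kronecker_add, evenProj_add_oddProj]

lemma parityMix_mul [Fintype n] (A B C D : Matrix n n ℤ) :
    parityMix A B * parityMix C D = parityMix (A * C) (B * D) := by
  have heven : evenProj * evenProj = evenProj := by decide +kernel
  have hodd : oddProj * oddProj = oddProj := by decide +kernel
  have heo : evenProj * oddProj = 0 := by decide +kernel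
  have hoe : oddProj * evenProj = 0 := by decide +kernel
  simp only [parityMix, Matrix.add_mul, Matrix.mul_add, ← mul_kronecker_mul, heven, hodd, heo, hoe,
    kronecker_zero, add_zero, zero_add]

lemma formTrace_parityMix [Fintype n] (K A B : Matrix n n ℤ) :
    formTrace (K ⊗ₖ fermionForm) (parityMix A B) =
      parityMix (formTrace K A) (formTrace K B) := by
  simp only [formTrace, parityMix, formAdjoint_add, formAdjoint_kronecker, formAdjoint_evenProj,
    formAdjoint_oddProj, add_kronecker]
  abel

lemma IsSignedPartialPerm.parityMix {A B : Matrix n n ℤ} (hA : IsSignedPartialPerm A)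
    (hB : IsSignedPartialPerm B) : IsSignedPartialPerm (parityMix A B) := by
  have heven : IsSignedPartialPerm evenProj := by decide +kernel
  have hodd : IsSignedPartialPerm oddProj := by decide +kernel
  have hrow : ∀ i j j', evenProj i j = 0 ∨ oddProj i j' = 0 := by
    simp [evenProj, oddProj, Fin.forall_fin_succ]
  have hcol : ∀ i i' j, evenProj i j = 0 ∨ oddProj i' j = 0 := by
    simp [evenProj, oddProj, Fin.forall_fin_succ]
  exact (hA.kronecker heven).add (hB.kronecker hodd)
    (fun i j j' ↦ (hrow i.2 j.2 j'.2).imp (mul_eq_zero_of_right _) (mul_eq_zero_of_right _))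
    (fun i i' j ↦ (hcol i.2 i'.2 j.2).imp (mul_eq_zero_of_right _) (mul_eq_zero_of_right _))

end ParityMix

section Extension

variable {J L n : Type*} [Fintype n] [DecidableEq n] {ε : ℤˣ} {K : Matrix n n ℤ}

/-- The columns of the enlarged system: each `P c` is doubled by its adjoint on the odd part, and
the `b f` are new. -/
def extendColumns (K : Matrix n n ℤ) (P : J → Matrix n n ℤ) (b : L → Matrix (Fin 4) (Fin 4) ℤ) :
    J ⊕ L → Matrix (n × Fin 4) (n × Fin 4) ℤ :=
  Sum.elim (fun c ↦ parityMix (P c) (formAdjoint K (P c))) (fun f ↦ 1 ⊗ₖ b f)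

lemma extendColumns_transpose (K : Matrix n n ℤ) (P : J → Matrix n n ℤ)
    (b : L → Matrix (Fin 4) (Fin 4) ℤ) (i : J ⊕ L) :
    (extendColumns K P b i)ᵀ = extendColumns K (fun c ↦ (P c)ᵀ) (fun f ↦ (b f)ᵀ) i := by
  rcases i with c | f
  · simp only [extendColumns, Sum.elim_inl, parityMix_transpose, formAdjoint_transpose]
  · simp only [extendColumns, Sum.elim_inr, ← kroneckerMap_transpose, transpose_one]

variable [DecidableEq J] [DecidableEq L]

lemma formTrace_parityMix_mul_parityMix {P : J → Matrix n n ℤ} {s : J → ℕ}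
    (hK : IsConjugation ε K) (hP : IsOrthogonalFamily K P s)
    (hPt : IsOrthogonalFamily K (fun c ↦ (P c)ᵀ) s) (c d : J) :
    formTrace (K ⊗ₖ fermionForm)
      ((parityMix (P c) (formAdjoint K (P c)))ᵀ * parityMix (P d) (formAdjoint K (P d))) =
      if c = d then s c • 1 else 0 := by
  have hodd : formTrace K ((formAdjoint K (P c))ᵀ * formAdjoint K (P d)) =
      if c = d then s c • 1 else 0 := by
    calc formTrace K ((formAdjoint K (P c))ᵀ * formAdjoint K (P d))
      _ = formTrace K (formAdjoint K (P d * (P c)ᵀ)) := by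
        rw [hK.formAdjoint_mul, formAdjoint_transpose]
      _ = (formTrace K ((P c)ᵀᵀ * (P d)ᵀ))ᵀ := by
        rw [hK.formTrace_formAdjoint, ← formTrace_transpose, transpose_mul, transpose_transpose,
          transpose_transpose]
      _ = if c = d then s c • 1 else 0 := by
        rw [hPt, apply_ite transpose, transpose_smul, transpose_one, transpose_zero]
  rw [parityMix_transpose, parityMix_mul, formTrace_parityMix, hP, hodd, parityMix_self]
  split_ifs
  · rw [smul_kronecker, one_kronecker_one]
  · exact zero_kronecker _

lemma formTrace_parityMix_mul_kronecker {b : L → Matrix (Fin 4) (Fin 4) ℤ}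
    (hK : IsConjugation ε K) (hb : IsFermionFamily b) (A : Matrix n n ℤ) (f : L) :
    formTrace (K ⊗ₖ fermionForm) ((parityMix A (formAdjoint K A))ᵀ * (1 ⊗ₖ b f)) = 0 := by
  have heven : formAdjoint fermionForm (evenProj * b f) = -(oddProj * b f) := by
    rw [isConjugation_fermionForm.formAdjoint_mul, hb.formAdjoint_eq, formAdjoint_evenProj,
      hb.oddProj_mul, Matrix.neg_mul]
  have hodd : formAdjoint fermionForm (oddProj * b f) = -(evenProj * b f) := by
    rw [isConjugation_fermionForm.formAdjoint_mul, hb.formAdjoint_eq, formAdjoint_oddProj,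
      hb.evenProj_mul, Matrix.neg_mul]
  rw [parityMix_transpose, parityMix, Matrix.add_mul, ← mul_kronecker_mul, ← mul_kronecker_mul,
    Matrix.mul_one, Matrix.mul_one, formTrace, formAdjoint_add, formAdjoint_kronecker,
    formAdjoint_kronecker, heven, hodd, ← formAdjoint_transpose, hK.formAdjoint_formAdjoint]
  simp only [← neg_one_smul ℤ (_ * _ : Matrix (Fin 4) (Fin 4) ℤ), kronecker_smul]
  module

lemma IsOrthogonalFamily.extend {P : J → Matrix n n ℤ} {s : J → ℕ}
    {b : L → Matrix (Fin 4) (Fin 4) ℤ} (hK : IsConjugation ε K) (hP : IsOrthogonalFamily K P s)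
    (hPt : IsOrthogonalFamily K (fun c ↦ (P c)ᵀ) s) (hb : IsFermionFamily b) :
    IsOrthogonalFamily (K ⊗ₖ fermionForm) (extendColumns K P b) (Sum.elim s fun _ ↦ 1) := by
  rintro (c | f) (d | g)
  · simpa only [extendColumns, Sum.elim_inl, Sum.inl.injEq] using
      formTrace_parityMix_mul_parityMix hK hP hPt c d
  · simpa only [extendColumns, Sum.elim_inl, Sum.elim_inr, reduceCtorEq, if_false] using
      formTrace_parityMix_mul_kronecker hK hb (P c) g
  · have h := congrArg transpose (formTrace_parityMix_mul_kronecker hK hb (P d) f)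
    rw [← formTrace_transpose, transpose_mul, transpose_transpose, transpose_zero] at h
    simpa only [extendColumns, Sum.elim_inl, Sum.elim_inr, reduceCtorEq, if_false] using h
  · simp only [extendColumns, Sum.elim_inr, Sum.inr.injEq, one_smul]
    rw [← kroneckerMap_transpose, ← mul_kronecker_mul, transpose_one, Matrix.one_mul, formTrace,
      formAdjoint_kronecker, hK.formAdjoint_one, ← kronecker_add, ← formTrace, hb.formTrace_eq]
    split_ifs
    · exact one_kronecker_one
    · exact kronecker_zero _

lemma IsOrthogonalSystem.extend {P : J → Matrix n n ℤ} {s : J → ℕ}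
    (h : IsOrthogonalSystem ε K P s) :
    IsOrthogonalSystem (-ε) (K ⊗ₖ fermionForm) (extendColumns K P fermionOp)
      (Sum.elim s fun _ ↦ 1) where
  isConjugation := mul_neg_one ε ▸ h.isConjugation.kronecker isConjugation_fermionForm
  isSignedPartialPerm := by
    have hK := h.isConjugation.isSignedPartialPerm
    rintro (c | f)
    · have hP := h.isSignedPartialPerm c
      exact hP.parityMix ((hK.mul hP.transpose).mul hK.transpose)
    · exact IsSignedPartialPerm.one.kronecker (isSignedPartialPerm_fermionOp f)
  weight := by
    rintro (c | f)
    · exact h.weight c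
    · exact .inl rfl
  family := h.family.extend h.isConjugation h.family_transpose isFermionFamily_fermionOp
  family_transpose := by
    simp only [extendColumns_transpose]
    exact h.family_transpose.extend h.isConjugation h.family isFermionFamily_fermionOp_transpose

end Extension

/-- Existence of an orthogonal system of sign `ε` with matrices of size `p` and with `q` columns. -/
def HasOrthogonalSystem (ε : ℤˣ) (p q : ℕ) : Prop :=
  ∃ (K : Matrix (Fin p) (Fin p) ℤ) (P : Fin q → Matrix (Fin p) (Fin p) ℤ) (s : Fin q → ℕ),
    IsOrthogonalSystem ε K P s

lemma IsOrthogonalSystem.hasOrthogonalSystem {J n : Type*} [Fintype n] [DecidableEq n] [Fintype J]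
    [DecidableEq J] {ε : ℤˣ} {K : Matrix n n ℤ} {P : J → Matrix n n ℤ} {s : J → ℕ}
    (h : IsOrthogonalSystem ε K P s) : HasOrthogonalSystem ε (Fintype.card n) (Fintype.card J) :=
  ⟨_, _, _, h.submatrix (Fintype.equivFin n).symm (Fintype.equivFin J).symm.toEmbedding⟩

namespace HasOrthogonalSystem

variable {ε : ℤˣ} {p q : ℕ}

lemma mono {q' : ℕ} (h : HasOrthogonalSystem ε p q) (hq : q' ≤ q) :
    HasOrthogonalSystem ε p q' := by
  obtain ⟨K, P, s, h⟩ := h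
  exact ⟨_, _, _, h.submatrix (Equiv.refl _) (Fin.castLEEmb hq)⟩

lemma extend (h : HasOrthogonalSystem ε p q) : HasOrthogonalSystem (-ε) (p * 4) (q + 4) := by
  obtain ⟨K, P, s, h⟩ := h
  simpa only [Fintype.card_prod, Fintype.card_sum, Fintype.card_fin] using
    h.extend.hasOrthogonalSystem

lemma extend_extend (h : HasOrthogonalSystem ε p q) : HasOrthogonalSystem ε (16 * p) (q + 8) := by
  have := h.extend.extend
  rwa [neg_neg, mul_assoc, mul_comm, add_assoc] at this

lemma pos_two_two : HasOrthogonalSystem 1 2 2 := by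
  refine ⟨!![0, 1; 1, 0], ![!![1, 0; 0, 0], !![0, 0; 0, 1]], fun _ ↦ 1, ⟨?_, ?_, ?_, ?_⟩, ?_, ?_,
    ?_, ?_⟩ <;> decide +kernel

lemma pos_four_four : HasOrthogonalSystem 1 4 4 := by
  refine ⟨!![0, 0, 0, 1; 0, 0, -1, 0; 0, -1, 0, 0; 1, 0, 0, 0],
    ![!![1, 0, 0, 0; 0, 1, 0, 0; 0, 0, 0, 0; 0, 0, 0, 0],
      !![0, 0, 0, 0; 0, 0, 0, 0; 0, 0, 1, 0; 0, 0, 0, 1],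
      !![0, 0, 1, 0; 0, 0, 0, 1; 0, 0, 0, 0; 0, 0, 0, 0],
      !![0, 0, 0, 0; 0, 0, 0, 0; 1, 0, 0, 0; 0, 1, 0, 0]],
    fun _ ↦ 1, ⟨?_, ?_, ?_, ?_⟩, ?_, ?_, ?_, ?_⟩ <;> decide +kernel

lemma neg_two_four : HasOrthogonalSystem (-1) 2 4 := by
  refine ⟨!![0, 1; -1, 0],
    ![!![1, 0; 0, 0], !![0, 0; 0, 1], !![0, 1; 0, 0], !![0, 0; 1, 0]],
    fun _ ↦ 1, ⟨?_, ?_, ?_, ?_⟩, ?_, ?_, ?_, ?_⟩ <;> decide +kernel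

lemma neg_four_five : HasOrthogonalSystem (-1) 4 5 := by
  refine ⟨fermionForm, vecCons 1 fermionOp, ![2, 1, 1, 1, 1], isConjugation_fermionForm,
    ?_, ?_, ?_, ?_⟩ <;> decide +kernel

end HasOrthogonalSystem

lemma delta_add_eight {n : ℕ} (hn : 1 ≤ n) : delta (n + 8) = delta n + 4 := by
  have hmod : (n + 8 - 1) % 8 = (n - 1) % 8 := by omega
  have hdiv : (n + 8 - 1) / 8 = (n - 1) / 8 + 1 := by omega
  unfold delta
  rw [hmod, hdiv]
  split <;> ring

lemma nu_add_eight {n : ℕ} (hn : 1 ≤ n) : nu (n + 8) = 16 * nu n := by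
  rw [nu, delta_add_eight hn, pow_add, mul_comm, nu]
  norm_num

theorem hasOrthogonalSystem_nu (n : ℕ) (hn : 2 ≤ n) : HasOrthogonalSystem 1 (nu n) n := by
  have h44 := HasOrthogonalSystem.pos_four_four
  have h88 : HasOrthogonalSystem 1 8 8 := HasOrthogonalSystem.neg_two_four.extend
  have h169 : HasOrthogonalSystem 1 16 9 := HasOrthogonalSystem.neg_four_five.extend
  induction n using Nat.strong_induction_on with
  | _ n ih =>
    rcases le_or_gt n 9 with hn9 | hn9
    · interval_cases n
      · exact HasOrthogonalSystem.pos_two_two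
      · exact h44.mono (by norm_num)
      · exact h44
      · exact h88.mono (by norm_num)
      · exact h88.mono (by norm_num)
      · exact h88.mono (by norm_num)
      · exact h88
      · exact h169
    · obtain ⟨m, rfl⟩ := Nat.exists_eq_add_of_le' (show 8 ≤ n by omega)
      rw [nu_add_eight (by omega)]
      exact (ih m (by omega) (by omega)).extend_extend

lemma exists_pairing {I : Type*} [Fintype I] {k : ℕ} (hk : Fintype.card I / 2 = k)
    {σ : I → I} (hσ : σ.Involutive) (hfix : ∀ i, σ i ≠ i) :
    ∃ e : Fin k × Bool ≃ I, ∀ v b, σ (e (v, b)) = e (v, !b) := by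
  classical
  let : LinearOrder I := LinearOrder.lift' (Fintype.equivFin I) (Fintype.equivFin I).injective
  let f : {i // i < σ i} × Bool → I := fun p ↦ bif p.2 then p.1 else σ p.1
  have hf : f.Bijective := by
    refine ⟨?_, fun i ↦ ?_⟩
    · rintro ⟨⟨i, hi⟩, a⟩ ⟨⟨j, hj⟩, b⟩ h
      have := hσ i
      have := hσ j
      cases a <;> cases b <;> simp only [f, cond_true, cond_false] at h <;> grind
    · rcases (hfix i).lt_or_gt with h | h
      · exact ⟨(⟨σ i, by rwa [hσ]⟩, false), hσ i⟩
      · exact ⟨(⟨i, h⟩, true), rfl⟩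
  have hcard : Fintype.card {i // i < σ i} = k := by
    rw [← hk, ← Fintype.card_of_bijective hf, Fintype.card_prod, Fintype.card_bool,
      Nat.mul_div_cancel _ two_pos]
  refine ⟨((Fintype.equivFinOfCardEq hcard).symm.prodCongr (.refl _)).trans (.ofBijective f hf),
    fun v b ↦ ?_⟩
  cases b
  · exact hσ _
  · rfl

/-- `e` pairs the indices so that `K` is block diagonal with blocks `κ v • !![0, 1; 1, 0]`. -/
structure IsPairing {I V : Type*} (K : Matrix I I ℤ) (e : V × Bool ≃ I) (κ : V → ℤ) : Prop where
  sign : ∀ v, κ v = 1 ∨ κ v = -1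
  apply_eq : ∀ v b, K (e (v, b)) (e (v, !b)) = κ v
  apply_eq_zero : ∀ v b i, i ≠ e (v, !b) → K (e (v, b)) i = 0

lemma IsConjugation.exists_isPairing {I : Type*} [Fintype I] [DecidableEq I] {K : Matrix I I ℤ}
    (hK : IsConjugation 1 K) {k : ℕ} (hk : Fintype.card I / 2 = k) :
    ∃ (e : Fin k × Bool ≃ I) (κ : Fin k → ℤ), IsPairing K e κ := by
  have hsymm : ∀ i j, K j i = K i j := fun i j ↦ by
    simpa using congrFun₂ hK.transpose_eq i j
  have hrow : ∀ i, ∃ j, K i j ≠ 0 := fun i ↦ by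
    have hii : (K * Kᵀ) i i ≠ 0 := by rw [hK.mul_transpose, one_apply_eq]; exact one_ne_zero
    exact (IsSignedPartialPerm.exists_of_mul_ne_zero hii).imp fun _ h ↦ h.1
  choose σ hσ using hrow
  have hσ_eq : ∀ i j, K i j ≠ 0 → j = σ i := fun i j h ↦
    hK.isSignedPartialPerm.row_unique i _ _ h (hσ i)
  have hinv : σ.Involutive := fun i ↦ (hσ_eq _ _ (hsymm i (σ i) ▸ hσ i)).symm
  obtain ⟨e, he⟩ := exists_pairing hk hinv fun i h ↦ hσ i (h.symm ▸ hK.diag_eq_zero i)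
  refine ⟨e, fun v ↦ K (e (v, true)) (e (v, false)), fun v ↦ ?_, fun v b ↦ ?_, fun v b i hi ↦ ?_⟩
  · exact (hK.isSignedPartialPerm.entry _ _).resolve_left (he v true ▸ hσ _)
  · cases b
    · exact hsymm _ _
    · rfl
  · exact of_not_not fun h ↦ hi ((hσ_eq _ _ h).trans (he v b))

section RealVector

variable {I V : Type*} {K : Matrix I I ℤ} {e : V × Bool ≃ I} {κ : V → ℤ}

/-- The vector `w` with `conj w = K w` whose coordinates at the indices `e (v, true)` are the
variables `x v`. -/
def realVector (e : V × Bool ≃ I) (κ : V → ℤ) (x : V → ℂ) (i : I) : ℂ :=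
  bif (e.symm i).2 then x (e.symm i).1 else κ (e.symm i).1 * star (x (e.symm i).1)

@[simp]
lemma realVector_true (x : V → ℂ) (v : V) : realVector e κ x (e (v, true)) = x v := by
  simp [realVector]

@[simp]
lemma realVector_false (x : V → ℂ) (v : V) :
    realVector e κ x (e (v, false)) = κ v * star (x v) := by
  simp [realVector]

lemma IsPairing.sign_mul_self (h : IsPairing K e κ) (v : V) : (κ v : ℂ) * κ v = 1 := by
  rcases h.sign v with hv | hv <;> simp [hv]

variable [Fintype I]

lemma IsPairing.star_realVector (h : IsPairing K e κ) (x : V → ℂ) :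
    star (realVector e κ x) = K.map (Int.castRingHom ℂ) *ᵥ realVector e κ x := by
  ext i
  obtain ⟨⟨v, b⟩, rfl⟩ := e.surjective i
  rw [mulVec, dotProduct, Fintype.sum_eq_single (e (v, !b)) fun j hj ↦ by
    rw [map_apply, h.apply_eq_zero v b j hj, map_zero, zero_mul], map_apply, h.apply_eq]
  cases b
  · simp
  · simp [← mul_assoc, h.sign_mul_self]

variable [Fintype V]

lemma sum_eq_sum_pairs (e : V × Bool ≃ I) (f : I → ℂ) :
    ∑ i, f i = ∑ v, (f (e (v, true)) + f (e (v, false))) := by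
  rw [← e.sum_comp, Fintype.sum_prod_type]
  simp only [Fintype.sum_bool]

lemma IsPairing.star_realVector_dotProduct (h : IsPairing K e κ) (x : V → ℂ) :
    star (realVector e κ x) ⬝ᵥ realVector e κ x = 2 * ∑ v, (Complex.normSq (x v) : ℂ) := by
  rw [dotProduct, sum_eq_sum_pairs e, Finset.mul_sum]
  refine Finset.sum_congr rfl fun v _ ↦ ?_
  simp only [Pi.star_apply, realVector_true, realVector_false, RCLike.star_def, map_mul,
    Complex.conj_conj, map_intCast, Complex.normSq_eq_conj_mul_self]
  linear_combination (x v * starRingEnd ℂ (x v)) * h.sign_mul_self v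

end RealVector

section Dispersion

variable {I J R V : Type*} {e : V × Bool ≃ I} {κ : V → ℤ} {P : J → Matrix R I ℤ} {s : J → ℕ}

/-- The dispersion matrices of the design with columns `(√(s c))⁻¹ • P c w`, where `w` runs over the
vectors `realVector e κ x`: `A v` for `b = true` and `B v` for `b = false`. -/
noncomputable def dispersion (e : V × Bool ≃ I) (κ : V → ℤ) (P : J → Matrix R I ℤ) (s : J → ℕ)
    (b : Bool) (v : V) : Matrix R J ℂ :=
  of fun r c ↦ ((√(s c) : ℝ) : ℂ)⁻¹ * (((bif b then 1 else κ v) * P c r (e (v, b)) : ℤ) : ℂ)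

lemma dispersion_apply_mem (hκ : ∀ v, κ v = 1 ∨ κ v = -1) (hP : ∀ c, IsSignedPartialPerm (P c))
    (hs : ∀ c, s c = 1 ∨ s c = 2) (b : Bool) (v : V) (r : R) (c : J) :
    dispersion e κ P s b v r c ∈
      ({0, 1, -1, ((√2 : ℝ) : ℂ)⁻¹, -((√2 : ℝ) : ℂ)⁻¹} : Set ℂ) := by
  have hentry := (hP c).entry r (e (v, b))
  have hsign := hκ v
  rcases hs c with h | h <;> rcases hentry with p | p | p <;> rcases hsign with k | k <;>
    cases b <;> simp [dispersion, h, p, k]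

lemma eq_of_dispersion_apply_ne_zero (hP : ∀ c, IsSignedPartialPerm (P c)) {b b' : Bool} {v v' : V}
    {r : R} {c : J} (h : dispersion e κ P s b v r c ≠ 0) (h' : dispersion e κ P s b' v' r c ≠ 0) :
    (v, b) = (v', b') := by
  have hne : ∀ {b v}, dispersion e κ P s b v r c ≠ 0 → P c r (e (v, b)) ≠ 0 := fun h hP ↦
    h (by simp [dispersion, hP])
  exact e.injective ((hP c).row_unique r _ _ (hne h) (hne h'))

variable [Fintype I] [Fintype V]

lemma sum_smul_dispersion_apply (x : V → ℂ) (r : R) (c : J) :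
    (∑ v, (x v • dispersion e κ P s true v +
      starRingEnd ℂ (x v) • dispersion e κ P s false v)) r c =
      ((√(s c) : ℝ) : ℂ)⁻¹ * ((P c).map (Int.castRingHom ℂ) *ᵥ realVector e κ x) r := by
  rw [mulVec, dotProduct, sum_eq_sum_pairs e, Finset.mul_sum, Matrix.sum_apply]
  refine Finset.sum_congr rfl fun v _ ↦ ?_
  simp only [Matrix.add_apply, Matrix.smul_apply, dispersion, of_apply, cond_true, cond_false,
    map_apply, realVector_true, realVector_false, smul_eq_mul, Int.cast_mul, Int.cast_one,
    eq_intCast, RCLike.star_def]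
  ring

end Dispersion

section Gram

variable {I J V : Type*} [Fintype I] [DecidableEq I] [DecidableEq J] [Fintype V]
  {K : Matrix I I ℤ} {P : J → Matrix I I ℤ} {s : J → ℕ} {e : V × Bool ≃ I} {κ : V → ℤ}

lemma IsOrthogonalSystem.star_mulVec_realVector_dotProduct (h : IsOrthogonalSystem 1 K P s)
    (he : IsPairing K e κ) (x : V → ℂ) (c d : J) :
    star ((P c).map (Int.castRingHom ℂ) *ᵥ realVector e κ x) ⬝ᵥ
      ((P d).map (Int.castRingHom ℂ) *ᵥ realVector e κ x) =
      if c = d then s c * ∑ v, (Complex.normSq (x v) : ℂ) else 0 := by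
  have hstar : star ((P c).map (Int.castRingHom ℂ) *ᵥ realVector e κ x) =
      (P c).map (Int.castRingHom ℂ) *ᵥ star (realVector e κ x) := by
    ext r
    simp [mulVec, dotProduct]
  have hrel := h.family.two_mul_dotProduct_mulVec h.isConjugation (realVector e κ x) c d
  rw [← he.star_realVector, ← hstar, he.star_realVector_dotProduct] at hrel
  refine mul_left_cancel₀ two_ne_zero (hrel.trans ?_)
  split_ifs
  · ring
  · rw [mul_zero]

theorem IsOrthogonalSystem.conjTranspose_mul_self_sum_dispersion (h : IsOrthogonalSystem 1 K P s)
    (he : IsPairing K e κ) (x : V → ℂ) :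
    (∑ v, (x v • dispersion e κ P s true v +
        starRingEnd ℂ (x v) • dispersion e κ P s false v))ᴴ *
      (∑ v, (x v • dispersion e κ P s true v +
        starRingEnd ℂ (x v) • dispersion e κ P s false v)) =
      (∑ v, (Complex.normSq (x v) : ℂ)) • (1 : Matrix J J ℂ) := by
  set w : J → I → ℂ := fun c ↦ (P c).map (Int.castRingHom ℂ) *ᵥ realVector e κ x
  ext c d
  rw [mul_apply]
  calc _ = ∑ r, ((√(s c) : ℝ) : ℂ)⁻¹ * ((√(s d) : ℝ) : ℂ)⁻¹ * (star (w c r) * w d r) := by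
        refine Finset.sum_congr rfl fun r _ ↦ ?_
        rw [conjTranspose_apply, sum_smul_dispersion_apply, sum_smul_dispersion_apply, star_mul',
          star_inv₀, RCLike.star_def, Complex.conj_ofReal]
        ring
    _ = ((√(s c) : ℝ) : ℂ)⁻¹ * ((√(s d) : ℝ) : ℂ)⁻¹ *
        (if c = d then s c * ∑ v, (Complex.normSq (x v) : ℂ) else 0) := by
      rw [← Finset.mul_sum, ← h.star_mulVec_realVector_dotProduct he]
      rfl
    _ = _ := by
      rw [Matrix.smul_apply, one_apply]
      split_ifs with hcd
      · subst hcd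
        have hs : (s c : ℝ) ≠ 0 := by rcases h.weight c with hc | hc <;> simp [hc]
        have hsqrt : ((√(s c) : ℝ) : ℂ)⁻¹ * ((√(s c) : ℝ) : ℂ)⁻¹ * s c = 1 := by
          rw [← mul_inv, ← Complex.ofReal_mul, Real.mul_self_sqrt (Nat.cast_nonneg _),
            Complex.ofReal_natCast, inv_mul_cancel₀ (mod_cast hs)]
        rw [← mul_assoc, hsqrt, one_mul, smul_eq_mul, mul_one]
      · rw [mul_zero, smul_zero]

end Gram

/-- for every `n ≥ 2` there is a rate-1/2 scaled COD of size
`[ν(n), n, ν(n)/2]`: dispersion matrices `A_i, B_i` with entries in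
`{0, 1, −1, 1/√2, −1/√2}`, at most one nonzero entry among all of them at each position,
and `G(x)ᴴG(x) = (Σ|x_i|²)·I_n` for `G(x) = Σ (x_i A_i + conj(x_i) B_i)`. -/
theorem stmt7 (n : ℕ) (hn : 2 ≤ n) :
    ∃ A B : Fin (nu n / 2) → Matrix (Fin (nu n)) (Fin n) ℂ,
      (∀ (i : Fin (nu n / 2)) (r : Fin (nu n)) (c : Fin n),
        A i r c ∈ ({0, 1, -1, ((Real.sqrt 2 : ℝ) : ℂ)⁻¹, -((Real.sqrt 2 : ℝ) : ℂ)⁻¹} : Set ℂ) ∧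
        B i r c ∈ ({0, 1, -1, ((Real.sqrt 2 : ℝ) : ℂ)⁻¹, -((Real.sqrt 2 : ℝ) : ℂ)⁻¹} : Set ℂ)) ∧
      (∀ (r : Fin (nu n)) (c : Fin n) (s₁ s₂ : Fin (nu n / 2) × Bool),
        (cond s₁.2 (A s₁.1) (B s₁.1)) r c ≠ 0 →
        (cond s₂.2 (A s₂.1) (B s₂.1)) r c ≠ 0 → s₁ = s₂) ∧
      (∀ x : Fin (nu n / 2) → ℂ,
        (∑ i, (x i • A i + (starRingEnd ℂ) (x i) • B i))ᴴ *
          (∑ i, (x i • A i + (starRingEnd ℂ) (x i) • B i)) =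
        (∑ i, (Complex.normSq (x i) : ℂ)) • (1 : Matrix (Fin n) (Fin n) ℂ)) := by
  obtain ⟨K, P, s, h⟩ := hasOrthogonalSystem_nu n hn
  obtain ⟨e, κ, he⟩ := h.isConjugation.exists_isPairing (congrArg (· / 2) (Fintype.card_fin (nu n)))
  have hmem := dispersion_apply_mem (e := e) he.sign h.isSignedPartialPerm h.weight
  refine ⟨dispersion e κ P s true, dispersion e κ P s false,
    fun i r c ↦ ⟨hmem true i r c, hmem false i r c⟩, ?_,
    h.conjTranspose_mul_self_sum_dispersion he⟩
  rintro r c ⟨v, _ | _⟩ ⟨v', _ | _⟩ h₁ h₂ <;>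
    exact eq_of_dispersion_apply_ne_zero h.isSignedPartialPerm h₁ h₂
end

section
/- The minimum decoding delay of a rate-1/2 complex orthogonal design (admitting arbitrary complex linear combinations of the variables as entries) for 9 transmit antennas is 16. Precisely: (a) there exist complex 16×9 matrices A_i, B_i (0 ≤ i < 8) such that for all x ∈ ℂ^8, G(x) = Σ_{i<8} (x_i A_i + conj(x_i) B_i) satisfies G(x)ᴴG(x) = (Σ_{i<8} |x_i|²)·I_9; and (b) for every integer x with 1 ≤ x ≤ 7, there do not exist complex 2x×9 matrices A_i, B_i (0 ≤ i < x) such that for all z ∈ ℂ^x, G(z) = Σ_{i<x} (z_i A_i + conj(z_i) B_i) satisfies G(z)ᴴG(z) = (Σ_{i<x} |z_i|²)·I_9. -/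
open Matrix

/-!
Over the field generated by `r` independent variables, the sum `σ` of their squares is not a sum
of fewer than `r` squares: by the Cassels–Pfister theorem a representation by fewer squares of
rational functions would give one by polynomials, whose degree in the last variable is at most one,
and Witt cancellation would then remove that variable together with one square.

A real orthogonal design of `m × n` matrices, evaluated at the generic point, has `n` orthogonal
columns of squared length `σ`. If `r ≤ 2 ^ k < n`, then `σ` is a sum of `2 ^ k` squares, hence by
Pfister the multiplier of a similitude of dimension `2 ^ k`, which turns `2 ^ k` of the columns into
an orthonormal system. Since one more column is orthogonal to it, Witt cancellation makes `σ` a sum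
of `m - 2 ^ k` squares, and so `r ≤ m - 2 ^ k`. A complex design with `x` variables and `2 * x` rows
gives a real one with `r = 2 * x`, `m = 4 * x` and `n = 18`; taking `k = 4` yields `x ≥ 8`.

Conversely, the left multiplications by the basis octonions form a design with `8` variables.
Doubling it gives one of size `16 × 16` with `9` variables, and exchanging variables with columns
gives one of size `16 × 9` with `16` real, that is `8` complex, variables.
-/

section SumsOfSquares

variable {R : Type*}

/-- `x` is a sum of `n` squares: the refinement of `IsSumSq` that records the number of summands. -/
def IsSumNSq [NonUnitalNonAssocSemiring R] (n : ℕ) (x : R) : Prop :=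
  ∃ v : Fin n → R, v ⬝ᵥ v = x

theorem IsSumNSq.mono [NonUnitalNonAssocSemiring R] {m n : ℕ} {x : R} (h : IsSumNSq m x)
    (hmn : m ≤ n) : IsSumNSq n x := by
  obtain ⟨v, rfl⟩ := h
  obtain ⟨k, rfl⟩ := Nat.exists_eq_add_of_le hmn
  exact ⟨Fin.append v 0, by simp [dotProduct, Fin.sum_univ_add]⟩

theorem exists_isSumNSq_of_isSumSq [NonUnitalNonAssocSemiring R] {x : R} (h : IsSumSq x) :
    ∃ n, IsSumNSq n x := by
  induction h with
  | zero => exact ⟨0, 0, zero_dotProduct 0⟩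
  | sq_add a _ ih =>
    obtain ⟨n, v, rfl⟩ := ih
    exact ⟨n + 1, Fin.cons a v, by simp [dotProduct, Fin.sum_univ_succ]⟩

end SumsOfSquares

section FormallyReal

theorem dotProduct_self_eq_zero_of_isFormallyReal {R ι : Type*} [Fintype ι] [Ring R]
    [IsFormallyReal R] {v : ι → R} : v ⬝ᵥ v = 0 ↔ v = 0 := by
  classical
  refine ⟨fun h => funext fun i => ?_, by rintro rfl; simp⟩
  rw [dotProduct, ← Finset.add_sum_erase _ _ (Finset.mem_univ i)] at h
  have hi : v i * v i = 0 :=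
    IsFormallyReal.eq_zero_of_add_right (.mul_self _) (.sum_mul_self _ _) h
  exact pow_eq_zero_iff two_ne_zero |>.1 (by rw [sq, hi])

theorem isFormallyReal_of_forall_dotProduct_self {R : Type*} [NonUnitalNonAssocSemiring R]
    (h : ∀ (n : ℕ) (v : Fin n → R), v ⬝ᵥ v = 0 → v = 0) : IsFormallyReal R := by
  refine .of_eq_zero_of_eq_zero_of_mul_self_add fun {s a} hs has => ?_
  obtain ⟨n, v, rfl⟩ := exists_isSumNSq_of_isSumSq hs
  have hv := h (n + 1) (Fin.cons a v) (by simpa [dotProduct, Fin.sum_univ_succ] using has)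
  simpa using congrFun hv 0

theorem charZero_of_isFormallyReal (R : Type*) [Ring R] [Nontrivial R] [IsFormallyReal R] :
    CharZero R := by
  have : IsSemireal R := ⟨fun hs h => one_ne_zero <|
    IsFormallyReal.eq_zero_of_add_right .one hs h⟩
  infer_instance

open Polynomial in
instance isFormallyReal_polynomial {F : Type*} [CommRing F] [IsDomain F] [IsFormallyReal F] :
    IsFormallyReal F[X] := by
  have := charZero_of_isFormallyReal F
  refine isFormallyReal_of_forall_dotProduct_self fun n v hv => funext fun i => ?_
  refine Polynomial.funext fun x => ?_
  have hx : (fun j => (v j).eval x) ⬝ᵥ (fun j => (v j).eval x) = 0 := by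
    simpa [dotProduct, eval_finsetSum] using congrArg (eval x) hv
  simpa using congrFun (dotProduct_self_eq_zero_of_isFormallyReal.1 hx) i

theorem exists_ne_zero_smul_eq_algebraMap {ι : Type*} [Finite ι] (R : Type*) {K : Type*}
    [CommRing R] [IsDomain R] [CommRing K] [Algebra R K] [IsFractionRing R K] (v : ι → K) :
    ∃ b : R, b ≠ 0 ∧ ∃ p : ι → R, b • v = algebraMap R K ∘ p := by
  obtain ⟨b, hb⟩ := IsLocalization.exist_integer_multiples_of_finite (nonZeroDivisors R) v
  choose p hp using hb
  exact ⟨b, nonZeroDivisors.ne_zero b.2, p, funext fun i => (hp i).symm⟩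

theorem isFormallyReal_of_isFractionRing (R K : Type*) [CommRing R] [IsDomain R]
    [IsFormallyReal R] [Field K] [Algebra R K] [IsFractionRing R K] : IsFormallyReal K := by
  refine isFormallyReal_of_forall_dotProduct_self fun n v hv => ?_
  obtain ⟨b, hb, p, hp⟩ := exists_ne_zero_smul_eq_algebraMap R v
  have hpp : p ⬝ᵥ p = 0 := by
    apply IsFractionRing.injective R K
    rw [RingHom.map_dotProduct, ← hp, smul_dotProduct, dotProduct_smul, hv]
    simp
  rw [dotProduct_self_eq_zero_of_isFormallyReal.1 hpp] at hp
  have hv0 : algebraMap R K b • v = 0 := by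
    rw [algebraMap_smul, hp]
    exact funext fun _ => map_zero (algebraMap R K)
  refine (smul_eq_zero.1 hv0).resolve_left ?_
  simpa using hb

end FormallyReal

section Cancellation

variable {F : Type*} [Field F]

/-- For a unit vector `v`, this restricts on the orthogonal complement of `v` to the reflection
exchanging `v` with the first basis vector, the first coordinate of the image (which is `0`) being
dropped. If `v` is the first basis vector itself, the quotient by `0` is `0`, as it should be. -/
def reflectTail {n : ℕ} (v w : Fin (n + 1) → F) : Fin n → F :=
  Fin.tail w + (w 0 / (1 - v 0)) • Fin.tail v

theorem dotProduct_reflectTail [IsFormallyReal F] {n : ℕ} {v w z : Fin (n + 1) → F}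
    (hv : v ⬝ᵥ v = 1) (hw : v ⬝ᵥ w = 0) (hz : v ⬝ᵥ z = 0) :
    reflectTail v w ⬝ᵥ reflectTail v z = w ⬝ᵥ z := by
  have split (x y : Fin (n + 1) → F) : x ⬝ᵥ y = x 0 * y 0 + Fin.tail x ⬝ᵥ Fin.tail y := by
    simp [dotProduct, Fin.sum_univ_succ, Fin.tail]
  rw [split] at hv hw hz
  have expand : reflectTail v w ⬝ᵥ reflectTail v z =
      Fin.tail w ⬝ᵥ Fin.tail z + z 0 / (1 - v 0) * (Fin.tail v ⬝ᵥ Fin.tail w) +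
      w 0 / (1 - v 0) * (Fin.tail v ⬝ᵥ Fin.tail z) +
      w 0 / (1 - v 0) * (z 0 / (1 - v 0)) * (Fin.tail v ⬝ᵥ Fin.tail v) := by
    simp only [reflectTail, add_dotProduct, dotProduct_add, smul_dotProduct, dotProduct_smul,
      smul_eq_mul, dotProduct_comm (Fin.tail w) (Fin.tail v)]
    ring
  rw [expand, split w z, eq_neg_of_add_eq_zero_right hw, eq_neg_of_add_eq_zero_right hz,
    eq_sub_of_add_eq' hv]
  by_cases hc : v 0 = 1
  · have htail : Fin.tail v = 0 := by
      rw [← dotProduct_self_eq_zero_of_isFormallyReal, eq_sub_of_add_eq' hv]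
      simp [hc]
    simp only [htail, zero_dotProduct, add_zero, hc, one_mul] at hw hz
    simp [hw, hz]
  · have : 1 - v 0 ≠ 0 := sub_ne_zero.2 (Ne.symm hc)
    field_simp
    ring

theorem exists_isSumNSq_of_orthonormal [IsFormallyReal F] {m n : ℕ} {v : Fin m → Fin n → F}
    {w : Fin n → F} (hv : ∀ i j, v i ⬝ᵥ v j = (1 : Matrix _ _ F) i j) (hw : ∀ i, v i ⬝ᵥ w = 0) :
    ∃ l, l + m = n ∧ IsSumNSq l (w ⬝ᵥ w) := by
  induction m generalizing n with
  | zero => exact ⟨n, rfl, w, rfl⟩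
  | succ m ih =>
    cases n with
    | zero => simpa [dotProduct] using hv 0 0
    | succ n =>
      have h0 : v 0 ⬝ᵥ v 0 = 1 := by simp [hv]
      have hs (i : Fin m) : v 0 ⬝ᵥ v i.succ = 0 := by
        rw [hv, one_apply_ne (Fin.succ_ne_zero i).symm]
      obtain ⟨l, rfl, hl⟩ := ih (v := fun i => reflectTail (v 0) (v i.succ))
        (w := reflectTail (v 0) w)
        (fun i j => by
          rw [dotProduct_reflectTail h0 (hs i) (hs j), hv]
          simp [one_apply])
        (fun i => by rw [dotProduct_reflectTail h0 (hs i) (hw 0), hw])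
      rw [dotProduct_reflectTail h0 (hw 0) (hw 0)] at hl
      exact ⟨l, rfl, hl⟩

end Cancellation

section CasselsPfister

open Polynomial

variable {F ι : Type*} [Field F] [Fintype ι]

theorem natDegree_dotProduct_mod_self_lt {q : F[X]} (hq : q.natDegree ≠ 0) (p : ι → F[X]) :
    ((fun i => p i % q) ⬝ᵥ fun i => p i % q).natDegree < q.natDegree + q.natDegree := by
  have hle : ((fun i => p i % q) ⬝ᵥ fun i => p i % q).natDegree ≤
      (q.natDegree - 1) + (q.natDegree - 1) := by
    refine natDegree_sum_le_of_forall_le _ _ fun i _ => natDegree_mul_le_of_le ?_ ?_ <;>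
      exact Nat.le_sub_one_of_lt (natDegree_mod_lt (p i) hq)
  lia

theorem dotProduct_descent {R : Type*} [CommRing R] {p a : ι → R} {q f : R}
    (h : p ⬝ᵥ p = q ^ 2 * f) :
    let A := a ⬝ᵥ a - f
    let B := a ⬝ᵥ p - f * q
    (A • p - (2 * B) • a) ⬝ᵥ (A • p - (2 * B) • a) = (A * q - 2 * B) ^ 2 * f ∧
      q * (A * q - 2 * B) = (p - q • a) ⬝ᵥ (p - q • a) := by
  simp only [sub_dotProduct, dotProduct_sub, smul_dotProduct, dotProduct_smul, smul_eq_mul, h,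
    dotProduct_comm p a]
  constructor <;> ring

-- Cassels's descent: the line through the rational point `p / q` of the quadric `v ⬝ᵥ v = f` and
-- its integral part `p / q - r / q` meets the quadric again, at a point with a denominator of
-- smaller degree.
theorem exists_dotProduct_self_eq_of_eq_sq_mul [IsFormallyReal F] {q f : F[X]} {p : ι → F[X]}
    (hq : q ≠ 0) (h : p ⬝ᵥ p = q ^ 2 * f) : ∃ p' : ι → F[X], p' ⬝ᵥ p' = f := by
  induction hd : q.natDegree using Nat.strong_induction_on generalizing p q with
  | _ d ih =>
    set r : ι → F[X] := fun i => p i % q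
    set a : ι → F[X] := fun i => p i / q
    have hpr : p - q • a = r := funext fun i => (EuclideanDomain.mod_eq_sub_mul_div _ _).symm
    by_cases hr : r = 0
    · refine ⟨a, mul_left_cancel₀ (pow_ne_zero 2 hq) ?_⟩
      rw [← h, sub_eq_zero.1 (hpr.trans hr), smul_dotProduct, dotProduct_smul]
      simp only [smul_eq_mul]
      ring
    · obtain ⟨h', hmul⟩ := dotProduct_descent (a := a) h
      set q' := (a ⬝ᵥ a - f) * q - 2 * (a ⬝ᵥ p - f * q)
      rw [hpr] at hmul
      have hrr : r ⬝ᵥ r ≠ 0 := dotProduct_self_eq_zero_of_isFormallyReal.not.2 hr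
      have hq' : q' ≠ 0 := right_ne_zero_of_mul (hmul ▸ hrr)
      have hq0 : q.natDegree ≠ 0 := fun h0 => hr <| funext fun i =>
        EuclideanDomain.mod_eq_zero.2
          (isUnit_iff_degree_eq_zero.2 (degree_eq_iff_natDegree_eq hq |>.2 h0)).dvd
      refine ih q'.natDegree ?_ hq' h' rfl
      have := natDegree_dotProduct_mod_self_lt hq0 p
      rw [← hmul, natDegree_mul hq hq'] at this
      lia

theorem isSumNSq_algebraMap_iff [IsFormallyReal F] {K : Type*} [Field K] [Algebra F[X] K]
    [IsFractionRing F[X] K] {n : ℕ} {f : F[X]} :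
    IsSumNSq n (algebraMap F[X] K f) ↔ IsSumNSq n f := by
  constructor
  · rintro ⟨v, hv⟩
    obtain ⟨q, hq, p, hp⟩ := exists_ne_zero_smul_eq_algebraMap F[X] v
    refine exists_dotProduct_self_eq_of_eq_sq_mul (p := p) hq ?_
    apply IsFractionRing.injective F[X] K
    rw [RingHom.map_dotProduct, ← hp, smul_dotProduct, dotProduct_smul, hv]
    simp only [Algebra.smul_def, map_mul, map_pow]
    ring
  · rintro ⟨p, rfl⟩
    exact ⟨algebraMap F[X] K ∘ p, (RingHom.map_dotProduct _ _ _).symm⟩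

theorem natDegree_le_of_natDegree_dotProduct_self_le [IsFormallyReal F] {p : ι → F[X]} {d : ℕ}
    (h : (p ⬝ᵥ p).natDegree ≤ d + d) (i : ι) : (p i).natDegree ≤ d := by
  obtain ⟨j, -, hj⟩ := Finset.exists_max_image Finset.univ (fun i => (p i).natDegree)
    ⟨i, Finset.mem_univ i⟩
  set M := (p j).natDegree with hM
  refine (hj i (Finset.mem_univ i)).trans ?_
  by_contra! hdM
  have hcoeff : (fun i => (p i).coeff M) ⬝ᵥ (fun i => (p i).coeff M) = 0 := by
    rw [← coeff_eq_zero_of_natDegree_lt (h.trans_lt (add_lt_add hdM hdM)), dotProduct,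
      dotProduct, finsetSum_coeff]
    exact Finset.sum_congr rfl fun i hi =>
      (coeff_mul_add_eq_of_natDegree_le (hj i hi) (hj i hi)).symm
  have hj0 : p j = 0 :=
    leadingCoeff_eq_zero.1 (congrFun (dotProduct_self_eq_zero_of_isFormallyReal.1 hcoeff) j)
  rw [hM, hj0, natDegree_zero] at hdM
  exact Nat.not_lt_zero d hdM

theorem exists_isSumNSq_of_X_sq_add_C [IsFormallyReal F] {n : ℕ} {d : F}
    (h : IsSumNSq n (X ^ 2 + C d)) : ∃ l, l + 1 = n ∧ IsSumNSq l d := by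
  obtain ⟨p, hp⟩ := h
  have hdeg (i : Fin n) : (p i).natDegree ≤ 1 :=
    natDegree_le_of_natDegree_dotProduct_self_le
      (by rw [hp]; exact natDegree_X_pow_add_C.le) i
  set a : Fin n → F := fun i => (p i).coeff 1
  set b : Fin n → F := fun i => (p i).coeff 0
  have haa : a ⬝ᵥ a = 1 := by
    have h2 (i : Fin n) : (p i * p i).coeff 2 = a i * a i :=
      coeff_mul_add_eq_of_natDegree_le (hdeg i) (hdeg i)
    simpa [dotProduct, finsetSum_coeff, h2] using congrArg (coeff · 2) hp
  have hab : a ⬝ᵥ b = 0 := by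
    have := charZero_of_isFormallyReal F
    have h1 : a ⬝ᵥ b + a ⬝ᵥ b = 0 := by
      simpa [dotProduct, finsetSum_coeff, mul_coeff_one, Finset.sum_add_distrib, a, b,
        mul_comm ((p _).coeff 0)] using congrArg (coeff · 1) hp
    exact add_self_eq_zero.1 h1
  have hbb : b ⬝ᵥ b = d := by
    simpa [dotProduct, finsetSum_coeff] using congrArg (coeff · 0) hp
  simpa [hbb] using exists_isSumNSq_of_orthonormal (m := 1) (v := fun _ => a) (w := b)
    (fun i j => by rw [haa, Subsingleton.elim i j, one_apply_eq]) (fun _ => hab)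

end CasselsPfister

section GenericSumOfSquares

open Polynomial

universe u

theorem exists_formallyReal_extension_le_of_isSumNSq (K : Type u) [Field K] [IsFormallyReal K]
    (r : ℕ) :
    ∃ (F : Type u) (_ : Field F) (_ : Algebra K F) (_ : IsFormallyReal F) (t : Fin r → F),
      ∀ n, IsSumNSq n (t ⬝ᵥ t) → r ≤ n := by
  induction r with
  | zero => exact ⟨K, ‹_›, .id K, ‹_›, 0, fun n _ => n.zero_le⟩
  | succ r ih =>
    obtain ⟨F, _, _, _, t, ht⟩ := ih
    refine ⟨FractionRing F[X], inferInstance, inferInstance,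
      isFormallyReal_of_isFractionRing F[X] _,
      algebraMap F[X] _ ∘ Fin.cons X (C ∘ t), fun n hn => ?_⟩
    rw [← RingHom.map_dotProduct, isSumNSq_algebraMap_iff] at hn
    have hX : (Fin.cons X (C ∘ t) : Fin (r + 1) → F[X]) ⬝ᵥ Fin.cons X (C ∘ t) =
        X ^ 2 + C (t ⬝ᵥ t) := by
      rw [RingHom.map_dotProduct, sq]
      simp [dotProduct, Fin.sum_univ_succ]
    rw [hX] at hn
    obtain ⟨l, rfl, hl⟩ := exists_isSumNSq_of_X_sq_add_C hn
    exact Nat.succ_le_succ (ht l hl)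

end GenericSumOfSquares

section Similitude

/-- `T` is the matrix of a similitude of the standard quadratic form, with multiplier `c`. Both
products are recorded because neither identity implies the other when `c = 0`. -/
def IsSimilitude {ι R : Type*} [Fintype ι] [DecidableEq ι] [Semiring R] (c : R)
    (T : Matrix ι ι R) : Prop :=
  T * Tᵀ = c • 1 ∧ Tᵀ * T = c • 1

namespace IsSimilitude

variable {ι κ R F : Type*} [Fintype ι] [DecidableEq ι] [Fintype κ] [DecidableEq κ] [Semiring R]
  [Field F]

theorem zero : IsSimilitude (0 : R) (0 : Matrix ι ι R) := by
  constructor <;> simp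

theorem submatrix {c : R} {T : Matrix ι ι R} (h : IsSimilitude c T) (e : κ ≃ ι) :
    IsSimilitude c (T.submatrix e e) := by
  constructor
  · rw [transpose_submatrix, submatrix_mul_equiv, h.1, submatrix_smul, Pi.smul_apply,
      Pi.smul_apply, submatrix_one_equiv]
  · rw [transpose_submatrix, submatrix_mul_equiv, h.2, submatrix_smul, Pi.smul_apply,
      Pi.smul_apply, submatrix_one_equiv]

theorem fromBlocks_antidiagonal {c : R} {T : Matrix ι ι R} (h : IsSimilitude c T) :
    IsSimilitude c (fromBlocks 0 T T 0) := by
  constructor <;> simp [fromBlocks_transpose, fromBlocks_multiply, h.1, h.2, ← fromBlocks_one,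
    fromBlocks_smul]

theorem of_mul_transpose {c : F} (hc : c ≠ 0) {T : Matrix ι ι F} (h : T * Tᵀ = c • 1) :
    IsSimilitude c T := by
  have hinv : T * (c⁻¹ • Tᵀ) = 1 := by
    rw [Matrix.mul_smul, h, smul_smul, inv_mul_cancel₀ hc, one_smul]
  refine ⟨h, ?_⟩
  rw [← mul_eq_one_comm.1 hinv, smul_mul, smul_smul, mul_inv_cancel₀ hc, one_smul]

-- The lower left block is forced by orthogonality to the upper rows: its transpose `X` must solve
-- `A * X + B * A = 0`.
theorem fromBlocks_add {a b : F} (ha : a ≠ 0) (hab : a + b ≠ 0) {A B : Matrix ι ι F}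
    (hA : IsSimilitude a A) (hB : IsSimilitude b B) :
    IsSimilitude (a + b) (fromBlocks A B (-(a⁻¹ • (Aᵀ * Bᵀ * A))) Aᵀ) := by
  obtain ⟨hA₁, hA₂⟩ := hA
  have hoff : A * (a⁻¹ • (Aᵀ * (B * A))) = B * A := by
    rw [Matrix.mul_smul, ← Matrix.mul_assoc, hA₁, smul_mul, Matrix.one_mul, smul_smul,
      inv_mul_cancel₀ ha, one_smul]
  have hdiag : a⁻¹ • (Aᵀ * Bᵀ * A) * (a⁻¹ • (Aᵀ * (B * A))) = b • 1 := by
    rw [smul_mul, Matrix.mul_assoc, hoff, Matrix.mul_assoc, ← Matrix.mul_assoc Bᵀ, hB.2, smul_mul,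
      Matrix.mul_smul, Matrix.one_mul, hA₂, smul_smul, smul_smul, mul_right_comm,
      inv_mul_cancel₀ ha, one_mul]
  apply of_mul_transpose hab
  have hoff' := congrArg transpose hoff
  simp only [transpose_mul, transpose_smul, transpose_transpose, ← Matrix.mul_assoc] at hoff'
  simp only [fromBlocks_transpose, fromBlocks_multiply, ← fromBlocks_one, fromBlocks_smul,
    transpose_neg, transpose_smul, transpose_mul, transpose_transpose, smul_zero]
  congr 1
  · rw [hA₁, hB.1, add_smul]
  · rw [Matrix.mul_neg, hoff, neg_add_cancel]
  · rw [Matrix.neg_mul, hoff', neg_add_cancel]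
  · rw [Matrix.neg_mul, Matrix.mul_neg, neg_neg, hdiag, hA₂, add_smul, add_comm]

end IsSimilitude

theorem exists_isSimilitude_dotProduct_self {F : Type*} [Field F] {k : ℕ} (u : Fin (2 ^ k) → F) :
    ∃ T : Matrix (Fin (2 ^ k)) (Fin (2 ^ k)) F, IsSimilitude (u ⬝ᵥ u) T := by
  induction k with
  | zero =>
    refine ⟨diagonal u, ?_, ?_⟩ <;>
      ext i j <;> fin_cases i <;> fin_cases j <;> simp [dotProduct]
  | succ k ih =>
    obtain ⟨e⟩ : Nonempty (Fin (2 ^ (k + 1)) ≃ Fin (2 ^ k) ⊕ Fin (2 ^ k)) :=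
      Fintype.card_eq.1 (by simp [pow_succ, mul_two])
    obtain ⟨A, hA⟩ := ih (fun i => u (e.symm (.inl i)))
    obtain ⟨B, hB⟩ := ih (fun i => u (e.symm (.inr i)))
    set a := (fun i => u (e.symm (.inl i))) ⬝ᵥ (fun i => u (e.symm (.inl i)))
    set b := (fun i => u (e.symm (.inr i))) ⬝ᵥ (fun i => u (e.symm (.inr i)))
    have hu : u ⬝ᵥ u = a + b := by
      rw [← comp_equiv_dotProduct_comp_equiv u u e.symm, dotProduct, Fintype.sum_sum_type]
      rfl
    by_cases hab : a + b = 0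
    · exact ⟨0, hu ▸ hab ▸ .zero⟩
    by_cases ha : a = 0
    · exact ⟨_, by simpa [hu, ha] using hB.fromBlocks_antidiagonal.submatrix e⟩
    · exact ⟨_, hu ▸ (hA.fromBlocks_add ha hab hB).submatrix e⟩

end Similitude

section Columns

variable {F m n : Type*} [Field F] [IsFormallyReal F] [Fintype m] [Fintype n] [DecidableEq n]
  {k : ℕ} {σ : F}

theorem exists_isSumNSq_of_transpose_mul_self_eq_one {V : Matrix m n F} (hV : Vᵀ * V = 1)
    {w : m → F} (hw : Vᵀ *ᵥ w = 0) :
    ∃ l, l + Fintype.card n = Fintype.card m ∧ IsSumNSq l (w ⬝ᵥ w) := by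
  let e := (Fintype.equivFin m).symm
  let f := (Fintype.equivFin n).symm
  rw [← comp_equiv_dotProduct_comp_equiv w w e]
  refine exists_isSumNSq_of_orthonormal (v := fun j => Vᵀ (f j) ∘ e) (fun i j => ?_) fun i => ?_
  · rw [comp_equiv_dotProduct_comp_equiv, ← submatrix_one_equiv f, ← hV]
    rfl
  · rw [comp_equiv_dotProduct_comp_equiv]
    exact congrFun hw (f i)

theorem exists_isSumNSq_of_orthogonal_columns (hσ : σ ≠ 0) (hσk : IsSumNSq (2 ^ k) σ)
    {N : Matrix m (Fin (2 ^ k)) F} (hN : Nᵀ * N = σ • 1) {w : m → F} (hw : Nᵀ *ᵥ w = 0) :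
    ∃ l, l + 2 ^ k = Fintype.card m ∧ IsSumNSq l (w ⬝ᵥ w) := by
  obtain ⟨u, rfl⟩ := hσk
  obtain ⟨T, hT, -⟩ := exists_isSimilitude_dotProduct_self u
  set σ := u ⬝ᵥ u
  have hV : (σ⁻¹ • (N * Tᵀ))ᵀ * (σ⁻¹ • (N * Tᵀ)) = 1 := by
    rw [transpose_smul, transpose_mul, transpose_transpose, smul_mul, Matrix.mul_smul,
      Matrix.mul_assoc, ← Matrix.mul_assoc Nᵀ, hN, smul_mul, Matrix.one_mul, Matrix.mul_smul, hT,
      smul_smul, smul_smul, smul_smul, inv_mul_cancel_right₀ hσ, inv_mul_cancel₀ hσ, one_smul]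
  rw [← Fintype.card_fin (2 ^ k)]
  refine exists_isSumNSq_of_transpose_mul_self_eq_one hV ?_
  rw [transpose_smul, transpose_mul, transpose_transpose, smul_mulVec, ← mulVec_mulVec, hw,
    mulVec_zero, smul_zero]

theorem exists_isSumNSq_of_transpose_mul_self_eq_smul (hσ : σ ≠ 0) (hσk : IsSumNSq (2 ^ k) σ)
    (hn : 2 ^ k < Fintype.card n) {M : Matrix m n F} (hM : Mᵀ * M = σ • 1) :
    ∃ l, l + 2 ^ k = Fintype.card m ∧ IsSumNSq l σ := by
  obtain ⟨g⟩ : Nonempty (Fin (2 ^ k + 1) ↪ n) :=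
    Function.Embedding.nonempty_of_card_le (by simpa using hn)
  have hcol (i j : n) : Mᵀ i ⬝ᵥ Mᵀ j = σ * (1 : Matrix n n F) i j := congrFun₂ hM i j
  let c : Fin (2 ^ k) → n := fun i => g i.castSucc
  have hc : Function.Injective c := g.injective.comp (Fin.castSucc_injective _)
  have hN : (M.submatrix id c)ᵀ * M.submatrix id c = σ • 1 := by
    rw [← submatrix_one c hc]
    exact Matrix.ext fun i j => hcol (c i) (c j)
  have hw : (M.submatrix id c)ᵀ *ᵥ Mᵀ (g (Fin.last _)) = 0 := by
    refine funext fun i => (hcol (c i) _).trans ?_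
    rw [one_apply_ne (g.injective.ne (Fin.castSucc_lt_last i).ne), mul_zero, Pi.zero_apply]
  have hlen : Mᵀ (g (Fin.last _)) ⬝ᵥ Mᵀ (g (Fin.last _)) = σ := by
    rw [hcol, one_apply_eq, mul_one]
  rw [← hlen]
  exact exists_isSumNSq_of_orthogonal_columns hσ hσk hN hw

end Columns

section RealDesigns

variable {ι m m' n n' R S : Type*} [Fintype ι] [Fintype m] [Fintype m']

theorem transpose_sum_mul_sum [CommSemiring R] (M : ι → Matrix m n R) (r : ι → R) :
    (∑ i, r i • M i)ᵀ * (∑ i, r i • M i) = ∑ i, ∑ j, (r i * r j) • ((M i)ᵀ * M j) := by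
  rw [transpose_sum, Matrix.sum_mul]
  refine Finset.sum_congr rfl fun i _ => ?_
  simp only [Matrix.mul_sum, transpose_smul, smul_mul, Matrix.mul_smul, smul_smul, mul_comm]

variable [DecidableEq n] [DecidableEq n']

/-- The linear combinations `∑ i, r i • M i` form a real orthogonal design: their columns are
orthogonal, of squared length `∑ i, r i * r i`. -/
def IsOrthogonalDesign [CommSemiring R] (M : ι → Matrix m n R) : Prop :=
  ∀ r : ι → R, (∑ i, r i • M i)ᵀ * (∑ i, r i • M i) = (r ⬝ᵥ r) • 1

theorem IsOrthogonalDesign.transpose_mul_add [DecidableEq ι] [CommRing R] {M : ι → Matrix m n R}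
    (h : IsOrthogonalDesign M) (i j : ι) :
    (M i)ᵀ * M j + (M j)ᵀ * M i = (2 * (1 : Matrix ι ι R) i j) • 1 := by
  have hself (i : ι) : (M i)ᵀ * M i = 1 := by simpa [Pi.single_apply] using h (Pi.single i 1)
  have hadd : (M i + M j)ᵀ * (M i + M j) = (2 + 2 * (1 : Matrix ι ι R) i j) • 1 := by
    have hsum : ∑ l, (Pi.single i 1 + Pi.single j 1 : ι → R) l • M l = M i + M j := by
      simp [Pi.single_apply, add_smul, Finset.sum_add_distrib]
    rw [← hsum, h]
    congr 1
    simp only [add_dotProduct, dotProduct_add, single_one_dotProduct, Pi.single_apply, one_apply,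
      if_true, eq_comm (a := j)]
    ring
  calc (M i)ᵀ * M j + (M j)ᵀ * M i
      = (M i + M j)ᵀ * (M i + M j) - (M i)ᵀ * M i - (M j)ᵀ * M j := by
        rw [transpose_add, Matrix.add_mul, Matrix.mul_add, Matrix.mul_add]
        abel
    _ = (2 * (1 : Matrix ι ι R) i j) • 1 := by
        rw [hadd, hself, hself, add_smul, two_smul]
        abel

theorem isOrthogonalDesign_of_transpose_mul_add [DecidableEq ι] [CommRing R] [NoZeroDivisors R]
    [NeZero (2 : R)] {M : ι → Matrix m n R}
    (h : ∀ i j, (M i)ᵀ * M j + (M j)ᵀ * M i = (2 * (1 : Matrix ι ι R) i j) • 1) :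
    IsOrthogonalDesign M := by
  intro r
  have h2 : (2 : R) • ((∑ i, r i • M i)ᵀ * (∑ i, r i • M i)) = (2 : R) • (r ⬝ᵥ r) • 1 :=
    calc _ = ∑ i, ∑ j, (r i * r j) • ((M i)ᵀ * M j + (M j)ᵀ * M i) := by
          simp only [smul_add, Finset.sum_add_distrib]
          rw [two_smul, transpose_sum_mul_sum, add_right_inj, Finset.sum_comm]
          simp only [mul_comm]
      _ = _ := by
          simp [h, one_apply, dotProduct, smul_smul, Finset.sum_smul, Finset.smul_sum, mul_comm]
  exact Matrix.ext fun a b => mul_left_cancel₀ two_ne_zero (congrFun₂ h2 a b)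

namespace IsOrthogonalDesign

theorem map [CommRing R] [CommRing S] [NoZeroDivisors S] [NeZero (2 : S)] {M : ι → Matrix m n R}
    (h : IsOrthogonalDesign M) (f : R →+* S) : IsOrthogonalDesign fun i => (M i).map f := by
  classical
  refine isOrthogonalDesign_of_transpose_mul_add fun i j => ?_
  have hf := congrArg (fun N => N.map f) (h.transpose_mul_add i j)
  simp only [Matrix.map_add, Matrix.map_mul, transpose_map, map_add, implies_true] at hf
  rw [hf]
  ext a b
  simp only [Matrix.map_apply, Matrix.smul_apply, smul_eq_mul, one_apply, map_mul, map_ofNat,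
    apply_ite f, map_one, map_zero]

theorem swap [Fintype n] [DecidableEq ι] [CommRing R] [NoZeroDivisors R] [NeZero (2 : R)]
    {M : ι → Matrix m n R} (h : IsOrthogonalDesign M) :
    IsOrthogonalDesign fun c => of fun p i => M i p c := by
  refine isOrthogonalDesign_of_transpose_mul_add fun c c' => Matrix.ext fun i j => ?_
  calc ∑ p, M i p c * M j p c' + ∑ p, M i p c' * M j p c
      = ∑ p, M i p c * M j p c' + ∑ p, M j p c * M i p c' := by simp only [mul_comm (M j _ c)]
    _ = 2 * (1 : Matrix ι ι R) i j * (1 : Matrix n n R) c c' :=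
        congrFun₂ (h.transpose_mul_add i j) c c'
    _ = 2 * (1 : Matrix n n R) c c' * (1 : Matrix ι ι R) i j := mul_right_comm _ _ _

theorem submatrix [CommSemiring R] {M : ι → Matrix m n R} (h : IsOrthogonalDesign M)
    (f : m' ≃ m) (g : n' ↪ n) : IsOrthogonalDesign fun i => (M i).submatrix f g := by
  intro r
  have hsum : ∑ i, r i • (M i).submatrix f g = (∑ i, r i • M i).submatrix f g := by
    ext
    simp [Matrix.sum_apply]
  rw [hsum, transpose_submatrix, submatrix_mul_equiv, h r]
  simp only [submatrix_smul, Pi.smul_apply, submatrix_one _ g.injective]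

theorem fromBlocks [Fintype n] [CommRing R] {M : ι → Matrix n n R} (h : IsOrthogonalDesign M)
    (hT : IsOrthogonalDesign fun i => (M i)ᵀ) :
    IsOrthogonalDesign fun i : Option ι =>
      i.elim 1 fun i => fromBlocks 0 (-(M i)ᵀ) (M i) 0 := by
  intro r
  set N := ∑ i, r (some i) • M i with hNdef
  have hsum : ∑ i : Option ι, r i • i.elim 1 (fun i => Matrix.fromBlocks 0 (-(M i)ᵀ) (M i) 0) =
      Matrix.fromBlocks (r none • 1) (-Nᵀ) N (r none • 1) := by
    ext (a | a) (b | b) <;> simp [Matrix.sum_apply, one_apply, hNdef]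
  have hN : Nᵀ * N = ((r ∘ some) ⬝ᵥ (r ∘ some)) • 1 := h (r ∘ some)
  have hN' : N * Nᵀ = ((r ∘ some) ⬝ᵥ (r ∘ some)) • 1 := by
    simpa [hNdef, transpose_sum] using hT (r ∘ some)
  rw [hsum]
  simp [fromBlocks_transpose, fromBlocks_multiply, hN, hN', dotProduct, Fintype.sum_option,
    ← fromBlocks_one, fromBlocks_smul, smul_smul, ← add_smul, add_comm]

theorem card_add_two_pow_le {K : Type*} [Field K] [IsFormallyReal K] [Nonempty ι] [Fintype n]
    {M : ι → Matrix m n K} (hM : IsOrthogonalDesign M) {k : ℕ} (hι : Fintype.card ι ≤ 2 ^ k)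
    (hn : 2 ^ k < Fintype.card n) : Fintype.card ι + 2 ^ k ≤ Fintype.card m := by
  obtain ⟨F, _, _, _, t, ht⟩ :=
    exists_formallyReal_extension_le_of_isSumNSq K (Fintype.card ι)
  have := charZero_of_isFormallyReal K
  have := charZero_of_isFormallyReal F
  have hF := hM.map (algebraMap K F) (t ∘ Fintype.equivFin ι)
  rw [comp_equiv_dotProduct_comp_equiv] at hF
  have hσ : t ⬝ᵥ t ≠ 0 := fun h0 =>
    Fintype.card_ne_zero (Nat.le_zero.1 (ht 0 ⟨0, by rw [h0, zero_dotProduct]⟩))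
  have hσk : IsSumNSq (2 ^ k) (t ⬝ᵥ t) := IsSumNSq.mono ⟨t, rfl⟩ hι
  obtain ⟨l, hl, hlσ⟩ := exists_isSumNSq_of_transpose_mul_self_eq_smul hσ hσk hn hF
  rw [← hl]
  exact Nat.add_le_add_right (ht l hlσ) _

end IsOrthogonalDesign

end RealDesigns

section Octonions

/-- Signs in the multiplication table of the octonions: the basis can be numbered so that
`e i * e c` is `octonionSign i c` times `e (i ^^^ c)`. -/
def octonionSign : Matrix (Fin 8) (Fin 8) ℤ :=
  !![1,  1,  1,  1,  1,  1,  1,  1;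
     1, -1,  1, -1,  1, -1, -1,  1;
     1, -1, -1,  1,  1,  1, -1, -1;
     1,  1, -1, -1,  1, -1,  1, -1;
     1, -1, -1, -1, -1,  1,  1,  1;
     1,  1, -1,  1, -1, -1, -1,  1;
     1,  1,  1, -1, -1,  1, -1, -1;
     1, -1,  1,  1, -1, -1,  1, -1]

/-- The matrix of left multiplication by the `i`-th basis octonion. -/
def octonionLeftMul (i : Fin 8) : Matrix (Fin 8) (Fin 8) ℤ :=
  of fun p c => if p = i ^^^ c then octonionSign i c else 0

theorem isOrthogonalDesign_octonionLeftMul : IsOrthogonalDesign octonionLeftMul :=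
  isOrthogonalDesign_of_transpose_mul_add (by decide +kernel)

theorem isOrthogonalDesign_transpose_octonionLeftMul :
    IsOrthogonalDesign fun i => (octonionLeftMul i)ᵀ :=
  isOrthogonalDesign_of_transpose_mul_add (by decide +kernel)

theorem exists_isOrthogonalDesign_sixteen_nine :
    ∃ M : Fin 8 ⊕ Fin 8 → Matrix (Fin 16) (Fin 9) ℤ, IsOrthogonalDesign M :=
  ⟨_, ((isOrthogonalDesign_octonionLeftMul.fromBlocks
    isOrthogonalDesign_transpose_octonionLeftMul).swap).submatrix
      (finSumFinEquiv (m := 8) (n := 8)).symm (finSuccEquiv 8).toEmbedding⟩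

end Octonions

section ComplexDesigns

variable {ι m n : Type*} [Fintype ι]

/-- The real and imaginary parts of a complex vector, as a single real vector. -/
def reIm (x : ι → ℂ) : ι ⊕ ι → ℝ :=
  Sum.elim (fun i => (x i).re) (fun i => (x i).im)

/-- The matrices `C i` and `D i` for which `x • A i + conj x • B i = re x • C i + im x • D i`. -/
def reImCoeff (A B : ι → Matrix m n ℂ) : ι ⊕ ι → Matrix m n ℂ :=
  Sum.elim (fun i => A i + B i) (fun i => Complex.I • (A i - B i))

theorem sum_smul_add_conj_smul (A B : ι → Matrix m n ℂ) (x : ι → ℂ) :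
    ∑ i, (x i • A i + (starRingEnd ℂ) (x i) • B i) = ∑ i, reIm x i • reImCoeff A B i := by
  rw [Fintype.sum_sum_type, ← Finset.sum_add_distrib]
  refine Finset.sum_congr rfl fun i _ => ?_
  have hx : x i = (x i).re + (x i).im * Complex.I := (Complex.re_add_im (x i)).symm
  have hxc : (starRingEnd ℂ) (x i) = (x i).re - (x i).im * Complex.I :=
    Complex.ext (by simp) (by simp)
  simp only [reIm, reImCoeff, Sum.elim_inl, Sum.elim_inr, ← Complex.coe_smul]
  rw [hxc]
  nth_rw 1 [hx]
  module

theorem ofReal_sum_normSq (x : ι → ℂ) :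
    ∑ i, (Complex.normSq (x i) : ℂ) = ((reIm x ⬝ᵥ reIm x : ℝ) : ℂ) := by
  simp [Complex.normSq_apply, Finset.sum_add_distrib, dotProduct, reIm]

/-- The complex matrix `Z = X + iY` as the real block matrix of the underlying real-linear map. -/
def realify : Matrix m n ℂ →ₗ[ℝ] Matrix (m ⊕ m) (n ⊕ n) ℝ where
  toFun Z := fromBlocks (Z.map Complex.re) (-Z.map Complex.im) (Z.map Complex.im)
    (Z.map Complex.re)
  map_add' Z W := by ext (_ | _) (_ | _) <;> simp [add_comm]
  map_smul' r Z := by ext (_ | _) (_ | _) <;> simp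

theorem realify_conjTranspose (Z : Matrix m n ℂ) : realify Zᴴ = (realify Z)ᵀ := by
  ext (_ | _) (_ | _) <;> simp [realify]

theorem realify_one [DecidableEq n] : realify (1 : Matrix n n ℂ) = 1 := by
  ext (_ | _) (_ | _) <;> simp [realify, one_apply, apply_ite Complex.im]

variable [Fintype m]

theorem realify_mul {l : Type*} (Z : Matrix l m ℂ) (W : Matrix m n ℂ) :
    realify (Z * W) = realify Z * realify W := by
  ext (_ | _) (_ | _) <;> simp [realify, mul_apply, Finset.sum_add_distrib,
    sub_eq_add_neg, add_comm]

variable [DecidableEq n]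

/-- The matrices `∑ i, (x i • A i + conj (x i) • B i)` form a complex orthogonal design. -/
def IsComplexOrthogonalDesign (A B : ι → Matrix m n ℂ) : Prop :=
  ∀ x : ι → ℂ,
    (∑ i, (x i • A i + (starRingEnd ℂ) (x i) • B i))ᴴ *
      (∑ i, (x i • A i + (starRingEnd ℂ) (x i) • B i)) =
    (∑ i, (Complex.normSq (x i) : ℂ)) • (1 : Matrix n n ℂ)

theorem IsComplexOrthogonalDesign.isOrthogonalDesign_realify {A B : ι → Matrix m n ℂ}
    (h : IsComplexOrthogonalDesign A B) :
    IsOrthogonalDesign fun i => realify (reImCoeff A B i) := by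
  intro r
  obtain ⟨x, rfl⟩ : ∃ x, r = reIm x :=
    ⟨fun i => ⟨r (.inl i), r (.inr i)⟩, (Sum.elim_comp_inl_inr r).symm⟩
  have hsum : ∑ i, reIm x i • realify (reImCoeff A B i) =
      realify (∑ i, (x i • A i + (starRingEnd ℂ) (x i) • B i)) := by
    simp only [sum_smul_add_conj_smul, map_sum, map_smul]
  rw [hsum, ← realify_conjTranspose, ← realify_mul, h, ofReal_sum_normSq, Complex.coe_smul,
    map_smul, realify_one]

theorem IsOrthogonalDesign.exists_isComplexOrthogonalDesign {M : ι ⊕ ι → Matrix m n ℝ}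
    (h : IsOrthogonalDesign M) :
    ∃ A B : ι → Matrix m n ℂ, IsComplexOrthogonalDesign A B := by
  let C (i : ι) : Matrix m n ℂ := (M (.inl i)).map Complex.ofReal
  let D (i : ι) : Matrix m n ℂ := (M (.inr i)).map Complex.ofReal
  let A (i : ι) := (2⁻¹ : ℂ) • (C i - Complex.I • D i)
  let B (i : ι) := (2⁻¹ : ℂ) • (C i + Complex.I • D i)
  have hM : reImCoeff A B = fun i => (M i).map Complex.ofReal := by
    funext i
    rcases i with i | i
    · change A i + B i = C i
      module
    · change Complex.I • (A i - B i) = D i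
      have hAB : A i - B i = -(Complex.I • D i) := by module
      rw [hAB, smul_neg, smul_smul, Complex.I_mul_I, neg_one_smul, neg_neg]
  refine ⟨A, B, fun x => ?_⟩
  have hsum : ∑ i, (x i • A i + (starRingEnd ℂ) (x i) • B i) =
      (∑ i, reIm x i • M i).map Complex.ofReal := by
    rw [sum_smul_add_conj_smul, hM]
    ext
    simp [Matrix.sum_apply]
  have hstar : ((∑ i, reIm x i • M i).map Complex.ofReal)ᴴ =
      (∑ i, reIm x i • M i)ᵀ.map Complex.ofReal := by
    ext
    simp
  rw [hsum, hstar, ofReal_sum_normSq]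
  have hmap := congrArg (fun N => N.map Complex.ofRealHom) (h (reIm x))
  rw [Matrix.map_mul] at hmap
  refine hmap.trans (Matrix.ext fun a b => ?_)
  simp [one_apply, apply_ite Complex.ofReal]

theorem IsComplexOrthogonalDesign.two_mul_card_add_two_pow_le [Nonempty ι] [Fintype n]
    {A B : ι → Matrix m n ℂ} (h : IsComplexOrthogonalDesign A B) {k : ℕ}
    (hι : 2 * Fintype.card ι ≤ 2 ^ k) (hn : 2 ^ k < 2 * Fintype.card n) :
    2 * Fintype.card ι + 2 ^ k ≤ 2 * Fintype.card m := by
  simpa [two_mul] using h.isOrthogonalDesign_realify.card_add_two_pow_le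
    (by simpa [two_mul] using hι) (by simpa [two_mul] using hn)

end ComplexDesigns

/-- the minimum decoding delay of a rate-1/2 COD (admitting arbitrary complex
linear combinations of the variables as entries) for 9 transmit antennas is 16:
(a) a `[16, 9, 8]` complex design exists; (b) for `1 ≤ x ≤ 7` no `[2x, 9, x]` complex
design exists. -/
theorem stmt9 :
    (∃ A B : Fin 8 → Matrix (Fin 16) (Fin 9) ℂ,
      ∀ x : Fin 8 → ℂ,
        (∑ i, (x i • A i + (starRingEnd ℂ) (x i) • B i))ᴴ *
          (∑ i, (x i • A i + (starRingEnd ℂ) (x i) • B i)) =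
        (∑ i, (Complex.normSq (x i) : ℂ)) • (1 : Matrix (Fin 9) (Fin 9) ℂ)) ∧
    (∀ x : ℕ, 1 ≤ x → x ≤ 7 →
      ¬ ∃ A B : Fin x → Matrix (Fin (2 * x)) (Fin 9) ℂ,
        ∀ z : Fin x → ℂ,
          (∑ i, (z i • A i + (starRingEnd ℂ) (z i) • B i))ᴴ *
            (∑ i, (z i • A i + (starRingEnd ℂ) (z i) • B i)) =
          (∑ i, (Complex.normSq (z i) : ℂ)) • (1 : Matrix (Fin 9) (Fin 9) ℂ)) := by
  constructor
  · obtain ⟨M, hM⟩ := exists_isOrthogonalDesign_sixteen_nine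
    exact (hM.map (Int.castRingHom ℝ)).exists_isComplexOrthogonalDesign
  · rintro x hx hx7 ⟨A, B, h⟩
    have : NeZero x := ⟨by lia⟩
    have hle : 2 * x + 2 ^ 4 ≤ 2 * (2 * x) := by
      simpa using IsComplexOrthogonalDesign.two_mul_card_add_two_pow_le h (k := 4)
        (by rw [Fintype.card_fin]; lia) (by simp)
    lia
end
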